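/- Let G be a cactus with n vertices, k cycles and m edges, with m > 15 and m > 4k, such that G is not the bundle C_1(n,k) of k quadrangles. Then Sz*_e(G) ≥ (2m² + 3m + 4k(6m−15) − 8)/4 if m ≥ 20, with equality iff G ≅ G*_1 (bundle of k quadrangles with a path of length 2 pendant at the common vertex plus remaining pendant edges); and Sz*_e(G) ≥ (3m² − 19m + 4k(6m−15) + 45)/4 if 15 < m ≤ 19, with equality iff G is the bundle of one triangle and k−1 quadrangles. -/

import Mathlib

open scoped Classical
open Finset

noncomputable def eDist {V : Type*} (G : SimpleGraph V) (f : Sym2 V) (w : V) : ℕ :=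
  Sym2.lift ⟨fun a b => min (G.dist a w) (G.dist b w), fun _ _ => min_comm _ _⟩ f

noncomputable def mCloser {V : Type*} (G : SimpleGraph V) [Fintype V] (u v : V) : ℕ :=
  (G.edgeFinset.filter fun f => eDist G f u < eDist G f v).card

noncomputable def mEqui {V : Type*} (G : SimpleGraph V) [Fintype V] (u v : V) : ℕ :=
  (G.edgeFinset.filter fun f => eDist G f u = eDist G f v).card

/-- The edge revised Szeged index (each edge `uv` is counted once; the double sum over
ordered adjacent pairs counts it twice, whence the division by 2). -/
noncomputable def szRevE {V : Type*} (G : SimpleGraph V) [Fintype V] : ℚ :=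
  (∑ u : V, ∑ v : V, if G.Adj u v then
      ((mCloser G u v : ℚ) + (mEqui G u v : ℚ) / 2) *
        ((mCloser G v u : ℚ) + (mEqui G u v : ℚ) / 2)
    else 0) / 2

/-- The edges of `G` lying in the connected component `c`. -/
noncomputable def compEdges {V : Type*} (G : SimpleGraph V) [Fintype V]
    (c : G.ConnectedComponent) : Finset (Sym2 V) :=
  G.edgeFinset.filter fun f => ∀ x ∈ f, G.connectedComponentMk x = c

/-- A cactus: a connected graph in which any two (edge-)distinct cycles share
at most one vertex. -/
def IsCactus {V : Type*} (G : SimpleGraph V) : Prop :=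
  G.Connected ∧ ∀ ⦃a b : V⦄ (p : G.Walk a a) (q : G.Walk b b),
    p.IsCycle → q.IsCycle → p.edges.toFinset ≠ q.edges.toFinset →
    (p.support.toFinset ∩ q.support.toFinset).card ≤ 1

/-- The bundle `G(len 0, …, len (k-1))`: `k` cycles of the given lengths all sharing a single
common hub vertex, together with `p` pendant edges attached at the hub. -/
def bundleGraph (k : ℕ) (len : Fin k → ℕ) (p : ℕ) :
    SimpleGraph (Unit ⊕ ((Σ i : Fin k, Fin (len i - 1)) ⊕ Fin p)) :=
  SimpleGraph.fromRel fun x y =>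
    match x, y with
    | Sum.inl _, Sum.inr (Sum.inr _) => True
    | Sum.inl _, Sum.inr (Sum.inl ⟨i, a⟩) => a.val = 0 ∨ a.val = len i - 2
    | Sum.inr (Sum.inl ⟨i, a⟩), Sum.inr (Sum.inl ⟨j, b⟩) => i = j ∧ a.val + 1 = b.val
    | _, _ => False

/-- `G*₁`: the bundle of `k` quadrangles on a hub, `n - 3k - 3` pendant edges at the hub,
and a pendant path of length 2 at the hub (i.e. `C₁(n-1,k)` with a pendant edge attached
to one of its pendant vertices). -/
def GStar1 (n k : ℕ) :
    SimpleGraph (Unit ⊕ ((Σ _ : Fin k, Fin 3) ⊕ (Fin (n - 3 * k - 3) ⊕ Fin 2))) :=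
  SimpleGraph.fromRel fun x y =>
    match x, y with
    | Sum.inl _, Sum.inr (Sum.inr (Sum.inl _)) => True
    | Sum.inl _, Sum.inr (Sum.inr (Sum.inr b)) => b.val = 0
    | Sum.inr (Sum.inr (Sum.inr a)), Sum.inr (Sum.inr (Sum.inr b)) => a.val = 0 ∧ b.val = 1
    | Sum.inl _, Sum.inr (Sum.inl ⟨_, a⟩) => a.val = 0 ∨ a.val = 2
    | Sum.inr (Sum.inl ⟨i, a⟩), Sum.inr (Sum.inl ⟨j, b⟩) => i = j ∧ a.val + 1 = b.val
    | _, _ => False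

/-! ### Part 1: basic quantities -/

noncomputable def dd {V : Type*} (G : SimpleGraph V) [Fintype V] (u v : V) : ℤ :=
  (mCloser G u v : ℤ) - (mCloser G v u : ℤ)

noncomputable def gg {V : Type*} (G : SimpleGraph V) [Fintype V] (u v : V) : ℤ :=
  (#G.edgeFinset : ℤ) ^ 2 - (dd G u v) ^ 2

lemma gg_comm {V : Type*} (G : SimpleGraph V) [Fintype V] (u v : V) : gg G u v = gg G v u := by
  unfold gg dd; ring

noncomputable def ge {V : Type*} (G : SimpleGraph V) [Fintype V] (e : Sym2 V) : ℤ :=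
  Sym2.lift ⟨fun u v => gg G u v, fun u v => gg_comm G u v⟩ e

lemma ge_mk {V : Type*} (G : SimpleGraph V) [Fintype V] (u v : V) : ge G s(u, v) = gg G u v := rfl

lemma closer_sum {V : Type*} (G : SimpleGraph V) [Fintype V] (u v : V) :
    mCloser G u v + mCloser G v u + mEqui G u v = #G.edgeFinset := by
  unfold mCloser mEqui
  simp only [Finset.card_filter]
  rw [← Finset.sum_add_distrib, ← Finset.sum_add_distrib, Finset.card_eq_sum_ones]
  refine Finset.sum_congr rfl fun f _ => ?_
  rcases lt_trichotomy (eDist G f u) (eDist G f v) with h | h | h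
  · simp [h, h.ne, h.le]
  · simp [h]
  · simp [h, h.ne', h.le]

lemma sz_eq {V : Type*} (G : SimpleGraph V) [Fintype V] :
    szRevE G = ((∑ u : V, ∑ v : V, if G.Adj u v then gg G u v else 0 : ℤ) : ℚ) / 8 := by
  unfold szRevE
  have : ∀ u v, (if G.Adj u v then
      ((mCloser G u v : ℚ) + (mEqui G u v : ℚ) / 2) *
        ((mCloser G v u : ℚ) + (mEqui G u v : ℚ) / 2)
    else 0) = ((if G.Adj u v then gg G u v else 0 : ℤ) : ℚ) / 4 := by
    intro u v
    split_ifs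
    · have h : ((mCloser G u v + mCloser G v u + mEqui G u v : ℕ) : ℚ) = (#G.edgeFinset : ℕ) := by
        rw [closer_sum]
      unfold gg dd
      push_cast at h ⊢
      rw [← h]; ring
    · simp
  simp only [this]
  push_cast
  simp only [← Finset.sum_div]
  ring

lemma sum_adj_eq {V : Type*} (G : SimpleGraph V) [Fintype V] :
    (∑ u : V, ∑ v : V, if G.Adj u v then gg G u v else 0) = 2 * ∑ e ∈ G.edgeFinset, ge G e := by
  rw [← Finset.sum_product' (f := fun u v => if G.Adj u v then gg G u v else 0)]
  rw [← Finset.sum_filter]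
  have h1 : ∑ a ∈ (univ ×ˢ univ : Finset (V × V)) with G.Adj a.1 a.2, gg G a.1 a.2
      = ∑ d : G.Dart, ge G d.edge := by
    symm
    refine Finset.sum_bij' (fun d _ ↦ (d.fst, d.snd)) (fun xy h ↦ ⟨xy, (mem_filter.1 h).2⟩) ?_ ?_ ?_ ?_ ?_
    · simp
    · simp
    · simp
    · simp
    · intro d _; rfl
  rw [h1]
  rw [← Finset.sum_fiberwise_of_maps_to (s := univ) (t := G.edgeFinset) (g := fun d : G.Dart => d.edge)
    (fun d _ => by rw [SimpleGraph.mem_edgeFinset]; exact d.edge_mem)]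
  rw [Finset.mul_sum]
  refine Finset.sum_congr rfl fun e he => ?_
  rw [Finset.sum_congr rfl (g := fun _ => ge G e) (by intro d hd; rw [(mem_filter.1 hd).2])]
  rw [Finset.sum_const, G.dart_edge_fiber_card e (by simpa using he)]
  simp

lemma sz_edges {V : Type*} (G : SimpleGraph V) [Fintype V] :
    szRevE G = ((∑ e ∈ G.edgeFinset, ge G e : ℤ) : ℚ) / 4 := by
  rw [sz_eq, sum_adj_eq]; push_cast; ring

/-! Local distance facts -/

lemma eDist_mk {V : Type*} (G : SimpleGraph V) (a b w : V) :
    eDist G s(a, b) w = min (G.dist a w) (G.dist b w) := rfl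

lemma eDist_left {V : Type*} (G : SimpleGraph V) (a b : V) : eDist G s(a, b) a = 0 := by
  simp [eDist_mk]

lemma eDist_right {V : Type*} (G : SimpleGraph V) (a b : V) : eDist G s(a, b) b = 0 := by
  simp [eDist_mk]

lemma eDist_pos {V : Type*} {G : SimpleGraph V} (hG : G.Connected) {a b w : V}
    (ha : a ≠ w) (hb : b ≠ w) : 0 < eDist G s(a, b) w := by
  rw [eDist_mk]
  exact lt_min (hG.pos_dist_of_ne ha) (hG.pos_dist_of_ne hb)

lemma dist_ge_two {V : Type*} {G : SimpleGraph V} (hG : G.Connected) {a w : V}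
    (ha : a ≠ w) (hb : ¬ G.Adj a w) : 2 ≤ G.dist a w := by
  have h1 := hG.pos_dist_of_ne ha
  have h2 : G.dist a w ≠ 1 := fun h => hb (SimpleGraph.dist_eq_one_iff_adj.1 h)
  omega

lemma eDist_ge_two {V : Type*} {G : SimpleGraph V} (hG : G.Connected) {a b w : V}
    (ha : a ≠ w) (hb : b ≠ w) (ha' : ¬ G.Adj a w) (hb' : ¬ G.Adj b w) :
    2 ≤ eDist G s(a, b) w := by
  rw [eDist_mk]
  exact le_min (dist_ge_two hG ha ha') (dist_ge_two hG hb hb')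

lemma eDist_le_one {V : Type*} {G : SimpleGraph V} {a b w : V}
    (ha : G.Adj a w ∨ G.Adj b w) : eDist G s(a, b) w ≤ 1 := by
  rw [eDist_mk]
  rcases ha with h | h
  · exact (min_le_left _ _).trans (SimpleGraph.dist_eq_one_iff_adj.2 h).le
  · exact (min_le_right _ _).trans (SimpleGraph.dist_eq_one_iff_adj.2 h).le

lemma closer_ge {V : Type*} (G : SimpleGraph V) [Fintype V] (u v : V) (T : Finset (Sym2 V))
    (hT : ∀ f ∈ T, f ∈ G.edgeSet ∧ eDist G f u < eDist G f v) : #T ≤ mCloser G u v := by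
  unfold mCloser
  refine Finset.card_le_card fun f hf => ?_
  have := hT f hf
  simp [this.1, this.2]

lemma equi_ge {V : Type*} (G : SimpleGraph V) [Fintype V] (u v : V) (T : Finset (Sym2 V))
    (hT : ∀ f ∈ T, f ∈ G.edgeSet ∧ eDist G f u = eDist G f v) : #T ≤ mEqui G u v := by
  unfold mEqui
  refine Finset.card_le_card fun f hf => ?_
  have := hT f hf
  simp [this.1, this.2]

/-- lower bound for the contribution of an edge from counts -/
lemma gg_ge {V : Type*} (G : SimpleGraph V) [Fintype V] (u v : V) (q b : ℕ)
    (hA : b ≤ mCloser G u v) (hB : b ≤ mCloser G v u) (hE : q ≤ mEqui G u v) :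
    (#G.edgeFinset : ℤ) ^ 2 - ((#G.edgeFinset : ℤ) - q - 2 * b) ^ 2 ≤ gg G u v := by
  have h := closer_sum G u v
  unfold gg dd
  rw [← h]
  push_cast
  zify at hA hB hE
  nlinarith

lemma equi_one {V : Type*} {G : SimpleGraph V} [Fintype V] {u v : V} (h : G.Adj u v) :
    1 ≤ mEqui G u v := by
  have := equi_ge G u v {s(u, v)} (by
    intro f hf
    rw [mem_singleton] at hf
    subst hf
    exact ⟨h, by rw [eDist_left, eDist_right]⟩)
  simpa using this

lemma closer_one {V : Type*} {G : SimpleGraph V} [Fintype V] (hG : G.Connected) {u v w : V}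
    (h : G.Adj u v) (hw : G.Adj u w) (hwv : w ≠ v) : 1 ≤ mCloser G u v := by
  have := closer_ge G u v {s(u, w)} (by
    intro f hf
    rw [mem_singleton] at hf
    subst hf
    refine ⟨hw, ?_⟩
    rw [eDist_left]
    exact eDist_pos hG h.ne hwv)
  simpa using this

/-- Any edge has contribution at least `2m-1`. -/
lemma gg_ge_base {V : Type*} {G : SimpleGraph V} [Fintype V] {u v : V} (h : G.Adj u v) :
    2 * (#G.edgeFinset : ℤ) - 1 ≤ gg G u v := by
  have := gg_ge G u v 1 0 (by simp) (by simp) (equi_one h)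
  push_cast at this
  nlinarith

/-- An edge without end-vertex of degree one has contribution at least `(2m-1) + 4(m-2)`. -/
lemma gg_ge_inner {V : Type*} {G : SimpleGraph V} [Fintype V] (hG : G.Connected) {u v u' v' : V}
    (h : G.Adj u v) (hu : G.Adj u u') (hu' : u' ≠ v) (hv : G.Adj v v') (hv' : v' ≠ u) :
    6 * (#G.edgeFinset : ℤ) - 9 ≤ gg G u v := by
  have := gg_ge G u v 1 1 (closer_one hG h hu hu') (closer_one hG h.symm hv hv') (equi_one h)
  push_cast at this
  nlinarith

/-- Equality case for an inner edge. -/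
lemma gg_inner_eq {V : Type*} {G : SimpleGraph V} [Fintype V] {u v : V}
    (h : G.Adj u v)
    (hm : 15 < #G.edgeFinset)
    (he : gg G u v ≤ 6 * (#G.edgeFinset : ℤ) - 9) :
    mCloser G u v ≤ 1 ∨ mCloser G v u ≤ 1 := by
  by_contra! hc
  have := gg_ge G u v 1 2 hc.1 hc.2 (equi_one h)
  push_cast at this
  have h' : (15:ℤ) < #G.edgeFinset := by exact_mod_cast hm
  nlinarith

/-! ### Part 2: cycles of a cactus -/

def IsCyc {V : Type*} (G : SimpleGraph V) (C : Finset (Sym2 V)) : Prop :=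
  ∃ (a : V) (p : G.Walk a a), p.IsCycle ∧ p.edges.toFinset = C

def CycDisj {V : Type*} (G : SimpleGraph V) : Prop :=
  ∀ ⦃C D : Finset (Sym2 V)⦄, IsCyc G C → IsCyc G D → ∀ e, e ∈ C → e ∈ D → C = D

noncomputable def cycs {V : Type*} [Fintype V] (G : SimpleGraph V) : Finset (Finset (Sym2 V)) :=
  univ.filter (IsCyc G)

lemma mem_cycs {V : Type*} [Fintype V] (G : SimpleGraph V) (C) : C ∈ cycs G ↔ IsCyc G C := by
  simp [cycs]

lemma cactus_disj {V : Type*} {G : SimpleGraph V} (hG : IsCactus G) : CycDisj G := by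
  rintro C D ⟨a, p, hp, rfl⟩ ⟨b, q, hq, rfl⟩ e he he'
  by_contra hne
  have h := hG.2 p q hp hq hne
  induction e with | h x y
  rw [List.mem_toFinset] at he he'
  have hxy : x ≠ y := (p.adj_of_mem_edges he).ne
  have hsub : ({x, y} : Finset V) ⊆ p.support.toFinset ∩ q.support.toFinset := by
    intro z hz
    simp only [mem_insert, mem_singleton] at hz
    rw [mem_inter, List.mem_toFinset, List.mem_toFinset]
    rcases hz with rfl | rfl
    · exact ⟨p.fst_mem_support_of_mem_edges he, q.fst_mem_support_of_mem_edges he'⟩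
    · exact ⟨p.snd_mem_support_of_mem_edges he, q.snd_mem_support_of_mem_edges he'⟩
  have := Finset.card_le_card hsub
  rw [Finset.card_pair hxy] at this
  omega

lemma isCyc_sub {V : Type*} {G : SimpleGraph V} {C : Finset (Sym2 V)} (h : IsCyc G C) :
    ∀ e ∈ C, e ∈ G.edgeSet := by
  obtain ⟨a, p, hp, rfl⟩ := h
  intro e he
  exact p.edges_subset_edgeSet (List.mem_toFinset.1 he)

lemma isCyc_delete {V : Type*} {G : SimpleGraph V} {e : Sym2 V} (C : Finset (Sym2 V)) :
    IsCyc (G.deleteEdges {e}) C ↔ IsCyc G C ∧ e ∉ C := by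
  constructor
  · intro h
    have h1 := isCyc_sub h
    refine ⟨?_, fun he => ?_⟩
    · obtain ⟨a, p, hp, rfl⟩ := h
      refine ⟨a, p.mapLe (SimpleGraph.deleteEdges_le _), hp.mapLe _, ?_⟩
      simp
    · have := h1 e he
      simp at this
  · rintro ⟨⟨a, p, hp, rfl⟩, he⟩
    have hp' : ∀ x ∈ p.edges, x ∈ (G.deleteEdges {e}).edgeSet := by
      intro x hx
      rw [SimpleGraph.edgeSet_deleteEdges]
      refine ⟨p.edges_subset_edgeSet hx, ?_⟩
      rintro rfl
      exact he (List.mem_toFinset.2 hx)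
    exact ⟨a, p.transfer _ hp', hp.transfer hp', by simp⟩

lemma isCyc_nonempty {V : Type*} {G : SimpleGraph V} {C : Finset (Sym2 V)} (h : IsCyc G C) :
    C.Nonempty := by
  obtain ⟨a, p, hp, rfl⟩ := h
  have h3 := hp.three_le_length
  rw [← p.length_edges] at h3
  rw [List.toFinset_nonempty_iff]
  rintro h
  simp [h] at h3

lemma cycs_count {V : Type*} [Fintype V] (N : ℕ) : ∀ (G : SimpleGraph V), G.Connected → CycDisj G →
    #(cycs G) = N → #G.edgeFinset + 1 = Fintype.card V + N := by
  induction N with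
  | zero =>
    intro G hG hQ h0
    rw [Finset.card_eq_zero] at h0
    have hT : G.IsTree := by
      refine ⟨hG, fun v c hc => ?_⟩
      have : c.edges.toFinset ∈ cycs G := (mem_cycs _ _).2 ⟨v, c, hc, rfl⟩
      rw [h0] at this
      simp at this
    rw [hT.card_edgeFinset]; rfl
  | succ N ih =>
    intro G hG hQ hN
    obtain ⟨C, hC⟩ : (cycs G).Nonempty := by
      rw [← Finset.card_pos]; omega
    have hC' := (mem_cycs _ _).1 hC
    obtain ⟨e, he⟩ := isCyc_nonempty hC'
    have heG : e ∈ G.edgeSet := isCyc_sub hC' e he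
    have hcyc : cycs (G.deleteEdges {e}) = (cycs G).erase C := by
      ext D
      rw [mem_erase, mem_cycs, mem_cycs, isCyc_delete]
      constructor
      · rintro ⟨h1, h2⟩
        exact ⟨fun h => h2 (h ▸ he), h1⟩
      · rintro ⟨h1, h2⟩
        exact ⟨h2, fun h => h1 (hQ h2 hC' e h he)⟩
    have hconn : (G.deleteEdges {e}).Connected := by
      induction e with | h x y
      refine hG.connected_delete_edge_of_not_isBridge fun hb => ?_
      obtain ⟨a, p, hp, rfl⟩ := hC'
      exact hb.notMem_edges_of_isCycle hp (List.mem_toFinset.1 he)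
    have hQ' : CycDisj (G.deleteEdges {e}) := by
      intro D D' hD hD' f hf hf'
      exact hQ ((isCyc_delete _).1 hD).1 ((isCyc_delete _).1 hD').1 f hf hf'
    have h := ih (G.deleteEdges {e}) hconn hQ' (by rw [hcyc, card_erase_of_mem hC, hN]; rfl)
    have hE : ∀ inst : Fintype (G.deleteEdges {e}).edgeSet,
        @SimpleGraph.edgeFinset _ (G.deleteEdges {e}) inst = G.edgeFinset.erase e := by
      intro inst
      ext f
      simp [and_comm]
    rw [hE, card_erase_of_mem (by simpa using heG)] at h
    have : 0 < #G.edgeFinset := Finset.card_pos.2 ⟨e, by simpa using heG⟩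
    omega

lemma cyc_ne_start {V : Type*} {G : SimpleGraph V} {a : V} {p : G.Walk a a} (hp : p.IsCycle)
    {i : ℕ} (h0 : 0 < i) (h1 : i < p.length) : p.getVert i ≠ a := by
  intro h
  rw [hp.getVert_endpoint_iff h1.le] at h
  omega

/-- vertices of a cycle are separated once the edges of the cycle are removed -/
lemma cyc_sep_aux {V : Type*} {G : SimpleGraph V} (hQ : CycDisj G) {a : V} {p : G.Walk a a}
    (hp : p.IsCycle) {i : ℕ} (h0 : 0 < i) (h1 : i < p.length) :
    ¬ (G.deleteEdges {e | e ∈ p.edges}).Reachable a (p.getVert i) := by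
  have h3 := hp.three_le_length
  set e : Sym2 V := s(p.getVert (p.length - 1), a) with he
  set f : Sym2 V := s(a, p.getVert 1) with hf
  have hae : a ∈ e := by simp [e]
  have haf : a ∈ f := by simp [f]
  have hep : e ∈ p.edges := by
    rw [he, p.mk_mem_edges_iff_exists]
    refine ⟨p.length - 1, by omega, ?_⟩
    rw [show p.length - 1 + 1 = p.length by omega, p.getVert_length]
  have hfp : f ∈ p.edges := by
    rw [hf, p.mk_mem_edges_iff_exists]
    exact ⟨0, by omega, by simp⟩
  have hne : f ≠ e := by
    rw [he, hf]
    intro h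
    rw [Sym2.eq_swap, Sym2.congr_left] at h
    have := hp.getVert_injOn' (show 1 ≤ p.length - 1 by omega) (show p.length - 1 ≤ p.length - 1 from le_rfl) h
    omega
  have hbr : (G.deleteEdges {e}).IsBridge f := by
    rw [SimpleGraph.isBridge_iff_forall_cycle_notMem]
    · intro u q hq hfq
      have h1 : IsCyc (G.deleteEdges {e}) q.edges.toFinset := ⟨u, q, hq, rfl⟩
      rw [isCyc_delete] at h1
      have h2 := hQ h1.1 ⟨a, p, hp, rfl⟩ f (List.mem_toFinset.2 hfq) (List.mem_toFinset.2 hfp)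
      exact h1.2 (h2 ▸ List.mem_toFinset.2 hep)
    · rw [SimpleGraph.edgeSet_deleteEdges]
      exact ⟨p.edges_subset_edgeSet hfp, hne⟩
  rw [hf, SimpleGraph.isBridge_iff, ← hf] at hbr
  have harc : ∀ j, j + 1 < p.length →
      ((G.deleteEdges {e}).deleteEdges {f}).Reachable (p.getVert 1) (p.getVert (j + 1)) := by
    intro j
    induction j with
    | zero => intro _; exact SimpleGraph.Reachable.refl _
    | succ j ih =>
      intro hj
      refine (ih (by omega)).trans (SimpleGraph.Adj.reachable ?_)
      have n1 : p.getVert (j + 1) ≠ a := cyc_ne_start hp (by omega) (by omega)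
      have n2 : p.getVert (j + 1 + 1) ≠ a := cyc_ne_start hp (by omega) (by omega)
      have key : ∀ g : Sym2 V, a ∈ g → s(p.getVert (j + 1), p.getVert (j + 1 + 1)) ≠ g := by
        intro g hg h
        rw [← h, Sym2.mem_iff] at hg
        rcases hg with h | h
        · exact n1 h.symm
        · exact n2 h.symm
      rw [SimpleGraph.deleteEdges_adj, SimpleGraph.deleteEdges_adj]
      exact ⟨⟨p.adj_getVert_succ (by omega), key e hae⟩, key f haf⟩
  intro hr
  apply hbr
  have hle : G.deleteEdges {e | e ∈ p.edges} ≤ (G.deleteEdges {e}).deleteEdges {f} := by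
    intro x y hxy
    rw [SimpleGraph.deleteEdges_adj] at hxy
    rw [SimpleGraph.deleteEdges_adj, SimpleGraph.deleteEdges_adj]
    refine ⟨⟨hxy.1, fun h => hxy.2 ?_⟩, fun h => hxy.2 ?_⟩
    · rw [Set.mem_singleton_iff] at h; rw [h]; exact hep
    · rw [Set.mem_singleton_iff] at h; rw [h]; exact hfp
  have h2 := harc (i - 1) (by omega)
  rw [show i - 1 + 1 = i by omega] at h2
  exact (hr.mono hle).trans h2.symm

lemma cyc_sep {V : Type*} {G : SimpleGraph V} (hQ : CycDisj G) {a : V} {p : G.Walk a a}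
    (hp : p.IsCycle) {x y : V} (hx : x ∈ p.support) (hy : y ∈ p.support)
    (h : (G.deleteEdges {e | e ∈ p.edges}).Reachable x y) : x = y := by
  by_contra hne
  have hq : (p.rotate x hx).IsCycle := by simpa using hp
  have hy' : y ∈ (p.rotate x hx).support := by
    rw [SimpleGraph.Walk.mem_support_rotate_iff]; exact hy
  obtain ⟨i, hi, hil⟩ := SimpleGraph.Walk.mem_support_iff_exists_getVert.1 hy'
  have hi0 : i ≠ 0 := by
    rintro rfl
    rw [SimpleGraph.Walk.getVert_zero] at hi
    exact hne hi
  have hil' : i ≠ (p.rotate x hx).length := by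
    rintro rfl
    rw [SimpleGraph.Walk.getVert_length] at hi
    exact hne hi
  apply cyc_sep_aux hQ hq (i := i) (by omega) (by omega)
  rw [hi]
  have : {e | e ∈ (p.rotate x hx).edges} = {e | e ∈ p.edges} := by
    ext e
    exact (p.rotate_edges x hx).mem_iff
  rw [this]
  exact h

/-- a chord-free statement: two adjacent vertices of a cycle are joined by a cycle edge -/
lemma cyc_chord {V : Type*} {G : SimpleGraph V} (hQ : CycDisj G) {a : V} {p : G.Walk a a}
    (hp : p.IsCycle) {x y : V} (hx : x ∈ p.support) (hy : y ∈ p.support) (h : G.Adj x y) :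
    s(x, y) ∈ p.edges := by
  by_contra hc
  refine h.ne (cyc_sep hQ hp hx hy (SimpleGraph.Adj.reachable ?_))
  rw [SimpleGraph.deleteEdges_adj]
  exact ⟨h, hc⟩

/-- a vertex joined by non-cycle edges to two cycle vertices: impossible -/
lemma cyc_two {V : Type*} {G : SimpleGraph V} (hQ : CycDisj G) {a : V} {p : G.Walk a a}
    (hp : p.IsCycle) {x y z : V} (hx : x ∈ p.support) (hy : y ∈ p.support) (h : G.Adj x z)
    (h' : G.Adj y z) (hxz : s(x, z) ∉ p.edges) (hyz : s(y, z) ∉ p.edges) : x = y := by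
  refine cyc_sep hQ hp hx hy (SimpleGraph.Reachable.trans (v := z) (SimpleGraph.Adj.reachable ?_)
    (SimpleGraph.Reachable.symm (SimpleGraph.Adj.reachable ?_)))
  · rw [SimpleGraph.deleteEdges_adj]
    exact ⟨h, hxz⟩
  · rw [SimpleGraph.deleteEdges_adj]
    exact ⟨h', hyz⟩

/-! ### Part 3: contribution of a cycle -/

/-- A cycle all of whose vertices but (possibly) `h` carry no further edges. -/
def ConcCyc {V : Type*} (G : SimpleGraph V) (C : Finset (Sym2 V)) (h : V) : Prop :=
  ∃ p : G.Walk h h, p.IsCycle ∧ p.edges.toFinset = C ∧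
    ∀ x ∈ p.support, x ≠ h → ∀ y, G.Adj x y → s(x, y) ∈ p.edges

lemma conc_or {V : Type*} {G : SimpleGraph V} (hQ : CycDisj G) {a : V} {p : G.Walk a a}
    (hp : p.IsCycle) : (∃ h, ConcCyc G p.edges.toFinset h) ∨
      ∃ x y x' y', x ≠ y ∧ x ∈ p.support ∧ y ∈ p.support ∧ x' ∉ p.support ∧ y' ∉ p.support ∧
        G.Adj x x' ∧ G.Adj y y' := by
  by_contra! hc
  obtain ⟨h1, h2⟩ := hc
  have key : ∀ h ∈ p.support, ∃ x ∈ p.support, ∃ x', x ≠ h ∧ x' ∉ p.support ∧ G.Adj x x' := by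
    intro h hh
    by_contra! hc
    apply h1 h
    refine ⟨p.rotate h hh, by simpa using hp, ?_, ?_⟩
    · ext e
      simp only [List.mem_toFinset]
      exact (p.rotate_edges h hh).mem_iff
    · intro x hx hxh y hxy
      rw [SimpleGraph.Walk.mem_support_rotate_iff] at hx
      rw [(p.rotate_edges h hh).mem_iff]
      refine cyc_chord hQ hp hx ?_ hxy
      by_contra hy
      exact hc x hx y hxh hy hxy
  obtain ⟨x, hx, x', -, hx', hxx'⟩ := key a p.start_mem_support
  obtain ⟨y, hy, y', hne, hy', hyy'⟩ := key x hx
  exact h2 x y x' y' hne.symm hx hy hx' hy' hxx' hyy'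

lemma cyc_card {V : Type*} {G : SimpleGraph V} {a : V} {p : G.Walk a a}
    (hp : p.IsCycle) : #p.edges.toFinset = p.length := by
  rw [List.toFinset_card_of_nodup hp.isTrail.edges_nodup, p.length_edges]

lemma cyc_orient {V : Type*} {G : SimpleGraph V} {a u v : V} {p : G.Walk a a}
    (hp : p.IsCycle) (h : s(u, v) ∈ p.edges) :
    ∃ q : G.Walk u u, q.IsCycle ∧ q.length = p.length ∧ q.getVert 1 = v := by
  have hu : u ∈ p.support := p.fst_mem_support_of_mem_edges h
  have hq : (p.rotate u hu).IsCycle := by simpa using hp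
  have hl : (p.rotate u hu).length = p.length := by simp
  have he : s(u, v) ∈ (p.rotate u hu).edges := by
    rw [(p.rotate_edges u hu).mem_iff]; exact h
  generalize p.rotate u hu = q at *
  rw [q.mk_mem_edges_iff_exists] at he
  obtain ⟨j, hj, hj'⟩ := he
  rw [Sym2.eq_iff] at hj'
  rcases hj' with ⟨h1, h2⟩ | ⟨h1, h2⟩
  · refine ⟨q, hq, hl, ?_⟩
    have : j = 0 := by
      by_contra h0
      exact cyc_ne_start hq (by omega) hj h1
    subst this
    exact h2
  · refine ⟨q.reverse, hq.reverse, by simpa using hl, ?_⟩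
    have : j + 1 = q.length := by
      by_contra h0
      exact cyc_ne_start hq (i := j + 1) (by omega) (by omega) h2
    rw [q.getVert_reverse, ← h1]
    congr 1
    omega

lemma cyc_inj {V : Type*} {G : SimpleGraph V} {a : V} {p : G.Walk a a}
    (hp : p.IsCycle) {i j : ℕ} (hi : i < p.length) (hj : j < p.length)
    (h : p.getVert i = p.getVert j) : i = j :=
  hp.getVert_injOn' (show i ≤ p.length - 1 by omega) (show j ≤ p.length - 1 by omega) h

lemma cyc_edge_idx {V : Type*} {G : SimpleGraph V} {a : V} {p : G.Walk a a}
    (hp : p.IsCycle) {i j : ℕ} (hi : i < p.length) (hj : j < p.length)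
    (h : s(p.getVert i, p.getVert j) ∈ p.edges) :
    j = i + 1 ∨ i = j + 1 ∨ (i = 0 ∧ j + 1 = p.length) ∨ (j = 0 ∧ i + 1 = p.length) := by
  rw [p.mk_mem_edges_iff_exists] at h
  obtain ⟨t, ht, h⟩ := h
  have key : ∀ s < p.length, p.getVert (t + 1) = p.getVert s → s = t + 1 ∨ (s = 0 ∧ t + 1 = p.length) := by
    intro s hs h
    rcases Nat.lt_or_ge (t + 1) p.length with h' | h'
    · left; exact (cyc_inj hp h' hs h).symm
    · right
      have ht' : t + 1 = p.length := by omega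
      refine ⟨?_, ht'⟩
      rw [ht', p.getVert_length] at h
      exact (cyc_inj hp (i := 0) (by omega) hs (by rw [p.getVert_zero]; exact h)).symm
  rw [Sym2.eq_iff] at h
  rcases h with ⟨h1, h2⟩ | ⟨h1, h2⟩
  · have := cyc_inj hp ht hi h1
    have := key j hj h2
    omega
  · have := cyc_inj hp ht hj h1
    have := key i hi h2
    omega

lemma long_half {V : Type*} {G : SimpleGraph V} [Fintype V] (hG : G.Connected) (hQ : CycDisj G)
    {a u v : V} {p : G.Walk a a} (hp : p.IsCycle) (h5 : 5 ≤ p.length) (h : s(u, v) ∈ p.edges) :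
    2 ≤ mCloser G v u := by
  obtain ⟨q, hq, hl, hv⟩ := cyc_orient hp h
  rw [← hl] at h5
  have hinj : ∀ i j, i < q.length → j < q.length → i ≠ j → q.getVert i ≠ q.getVert j :=
    fun i j hi hj hij h => hij (cyc_inj hq hi hj h)
  have h0 : q.getVert 0 = u := q.getVert_zero
  have n20 := hinj 2 0 (by omega) (by omega) (by omega)
  have n10 := hinj 1 0 (by omega) (by omega) (by omega)
  have n30 := hinj 3 0 (by omega) (by omega) (by omega)
  have n13 := hinj 1 3 (by omega) (by omega) (by omega)
  have n12 := hinj 1 2 (by omega) (by omega) (by omega)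
  have a12 : G.Adj (q.getVert 1) (q.getVert 2) := q.adj_getVert_succ (by omega)
  have a23 : G.Adj (q.getVert 2) (q.getVert 3) := q.adj_getVert_succ (by omega)
  have na20 : ¬ G.Adj (q.getVert 2) (q.getVert 0) := by
    intro h
    have := cyc_edge_idx hq (by omega) (by omega)
      (cyc_chord hQ hq (q.getVert_mem_support _) (q.getVert_mem_support _) h)
    omega
  have na30 : ¬ G.Adj (q.getVert 3) (q.getVert 0) := by
    intro h
    have := cyc_edge_idx hq (by omega) (by omega)
      (cyc_chord hQ hq (q.getVert_mem_support _) (q.getVert_mem_support _) h)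
    omega
  rw [h0] at n20 n10 n30 na20 na30
  rw [hv] at n10 n13 n12 a12
  have hc : #({s(v, q.getVert 2), s(q.getVert 2, q.getVert 3)} : Finset (Sym2 V)) = 2 := by
    rw [Finset.card_pair]
    rw [Ne, Sym2.eq_iff]
    tauto
  rw [← hc]
  refine closer_ge G v u _ ?_
  intro f hf
  simp only [mem_insert, mem_singleton] at hf
  rcases hf with rfl | rfl
  · refine ⟨a12, ?_⟩
    rw [eDist_left]
    exact eDist_pos hG n10 n20
  · refine ⟨a23, ?_⟩
    have h1 := eDist_le_one (G := G) (a := q.getVert 2) (b := q.getVert 3) (w := v) (Or.inl a12.symm)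
    have h2 := eDist_ge_two hG n20 n30 na20 na30
    omega

lemma long_edge {V : Type*} {G : SimpleGraph V} [Fintype V] (hG : G.Connected) (hQ : CycDisj G)
    {a u v : V} {p : G.Walk a a} (hp : p.IsCycle) (h5 : 5 ≤ p.length) (h : s(u, v) ∈ p.edges) :
    10 * (#G.edgeFinset : ℤ) - 25 ≤ gg G u v := by
  have h1 := long_half hG hQ hp h5 h
  have h2 := long_half hG hQ hp h5 (Sym2.eq_swap ▸ h)
  have := gg_ge G u v 1 2 h2 h1 (equi_one (p.adj_of_mem_edges h))
  push_cast at this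
  nlinarith

lemma long_cycle {V : Type*} {G : SimpleGraph V} [Fintype V] (hG : G.Connected) (hQ : CycDisj G)
    {a : V} {p : G.Walk a a} (hp : p.IsCycle) (h5 : 5 ≤ p.length) (hm : 15 < #G.edgeFinset) :
    4 * ((#G.edgeFinset : ℤ) - 2) <
    ∑ e ∈ p.edges.toFinset, (ge G e - (2 * (#G.edgeFinset : ℤ) - 1)) - (24 * (#G.edgeFinset : ℤ) - 60) := by
  have h1 : ∀ e ∈ p.edges.toFinset, 8 * (#G.edgeFinset : ℤ) - 24 ≤ ge G e - (2 * (#G.edgeFinset : ℤ) - 1) := by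
    intro e he
    induction e with | h u v
    have := long_edge hG hQ hp h5 (List.mem_toFinset.1 he)
    rw [ge_mk]
    linarith
  have h2 := Finset.card_nsmul_le_sum _ _ _ h1
  rw [cyc_card hp, nsmul_eq_mul] at h2
  have h3 : (5 : ℤ) ≤ p.length := by exact_mod_cast h5
  have h4 : (15 : ℤ) < #G.edgeFinset := by exact_mod_cast hm
  nlinarith

/-! quadrangles -/

structure Quad {V : Type*} (G : SimpleGraph V) (a b c d : V) : Prop where
  ab : G.Adj a b
  bc : G.Adj b c
  cd : G.Adj c d
  da : G.Adj d a
  ac : a ≠ c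
  bd : b ≠ d
  nac : ¬ G.Adj a c
  nbd : ¬ G.Adj b d
  sep : ∀ x y z, x ∈ ({a, b, c, d} : Set V) → y ∈ ({a, b, c, d} : Set V) →
    z ∉ ({a, b, c, d} : Set V) → G.Adj x z → G.Adj y z → x = y

lemma Quad.rot {V : Type*} {G : SimpleGraph V} {a b c d : V} (h : Quad G a b c d) :
    Quad G b c d a := by
  have : ({b, c, d, a} : Set V) = {a, b, c, d} := by ext x; simp; tauto
  refine ⟨h.bc, h.cd, h.da, h.ab, h.bd, h.ac.symm, h.nbd, fun h' => h.nac h'.symm, ?_⟩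
  rw [this]; exact h.sep

lemma Quad.refl {V : Type*} {G : SimpleGraph V} {a b c d : V} (h : Quad G a b c d) :
    Quad G b a d c := by
  have : ({b, a, d, c} : Set V) = {a, b, c, d} := by ext x; simp; tauto
  refine ⟨h.ab.symm, h.da.symm, h.cd.symm, h.bc.symm, h.bd, h.ac, h.nbd, h.nac, ?_⟩
  rw [this]; exact h.sep

lemma Quad.equi {V : Type*} {G : SimpleGraph V} [Fintype V] (hG : G.Connected) {a b c d : V}
    (h : Quad G a b c d) : 2 ≤ mEqui G a b := by
  have hc : #({s(a, b), s(c, d)} : Finset (Sym2 V)) = 2 := by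
    rw [Finset.card_pair]
    rw [Ne, Sym2.eq_iff]
    have := h.ac
    have := h.da.ne
    tauto
  rw [← hc]
  refine equi_ge G a b _ ?_
  intro f hf
  simp only [mem_insert, mem_singleton] at hf
  rcases hf with rfl | rfl
  · exact ⟨h.ab, by rw [eDist_left, eDist_right]⟩
  · refine ⟨h.cd, ?_⟩
    have h1 := eDist_le_one (G := G) (a := c) (b := d) (w := a) (Or.inr h.da)
    have h2 := eDist_le_one (G := G) (a := c) (b := d) (w := b) (Or.inl h.bc.symm)
    have h3 := eDist_pos hG (a := c) (b := d) (w := a) h.ac.symm h.da.ne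
    have h4 := eDist_pos hG (a := c) (b := d) (w := b) h.bc.ne' h.bd.symm
    omega

lemma Quad.edge {V : Type*} {G : SimpleGraph V} [Fintype V] (hG : G.Connected) {a b c d : V}
    (h : Quad G a b c d) : 8 * (#G.edgeFinset : ℤ) - 16 ≤ gg G a b := by
  have := gg_ge G a b 2 1 (closer_one hG h.ab h.da.symm h.bd.symm)
    (closer_one hG h.ab.symm h.bc h.ac.symm) (h.equi hG)
  push_cast at this
  nlinarith

lemma Quad.half {V : Type*} {G : SimpleGraph V} [Fintype V] (hG : G.Connected) {a b c d x z : V}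
    (h : Quad G a b c d) (hx : x = a ∨ x = d) (hz : z ∉ ({a, b, c, d} : Set V)) (hxz : G.Adj x z) :
    2 ≤ mCloser G a b := by
  have hz' : z ≠ a ∧ z ≠ b ∧ z ≠ c ∧ z ≠ d := by simpa using hz
  obtain ⟨za, zb, zc, zd⟩ := hz'
  have hc : #({s(a, d), s(x, z)} : Finset (Sym2 V)) = 2 := by
    rw [Finset.card_pair]
    rw [Ne, Sym2.eq_iff]
    tauto
  rw [← hc]
  refine closer_ge G a b _ ?_
  intro f hf
  simp only [mem_insert, mem_singleton] at hf
  rcases hf with rfl | rfl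
  · refine ⟨h.da.symm, ?_⟩
    rw [eDist_left]
    exact eDist_pos hG h.ab.ne h.bd.symm
  · refine ⟨hxz, ?_⟩
    rcases hx with rfl | rfl
    · rw [eDist_left]
      exact eDist_pos hG h.ab.ne zb
    · have h1 := eDist_le_one (G := G) (a := x) (b := z) (w := a) (Or.inl h.da)
      have h2 := eDist_ge_two hG (a := x) (b := z) (w := b) h.bd.symm zb (fun h' => h.nbd h'.symm)
        (fun h' => h.bd (h.sep b x z (by simp) (by simp) hz h'.symm hxz))
      omega

lemma Quad.edge' {V : Type*} {G : SimpleGraph V} [Fintype V] (hG : G.Connected)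
    {a b c d x z y z' : V} (h : Quad G a b c d) (hx : x = a ∨ x = d)
    (hz : z ∉ ({a, b, c, d} : Set V)) (hxz : G.Adj x z) (hy : y = b ∨ y = c)
    (hz' : z' ∉ ({a, b, c, d} : Set V)) (hyz : G.Adj y z') :
    12 * (#G.edgeFinset : ℤ) - 36 ≤ gg G a b := by
  have h1 := h.half hG hx hz hxz
  have h2 := h.refl.half hG hy (by intro h; apply hz'; simp at h ⊢; tauto) hyz
  have := gg_ge G a b 2 2 h1 h2 (h.equi hG)
  push_cast at this
  nlinarith

lemma quad_pair {V : Type*} {G : SimpleGraph V} [Fintype V] (hG : G.Connected)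
    {a b c d x z y z' : V} (h : Quad G a b c d) (hx : x = a ∨ x = d)
    (hz : z ∉ ({a, b, c, d} : Set V)) (hxz : G.Adj x z) (hy : y = b ∨ y = c)
    (hz' : z' ∉ ({a, b, c, d} : Set V)) (hyz : G.Adj y z') :
    40 * (#G.edgeFinset : ℤ) - 104 ≤ gg G a b + gg G b c + gg G c d + gg G d a := by
  have h1 := h.edge' hG hx hz hxz hy hz' hyz
  have hs : ({c, d, a, b} : Set V) = {a, b, c, d} := by ext x; simp; tauto
  have h2 := h.rot.rot.edge' hG hy.symm (hs ▸ hz') hyz hx.symm (hs ▸ hz) hxz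
  have h3 := h.rot.edge hG
  have h4 := h.rot.rot.rot.edge hG
  linarith

lemma quad_nonconc {V : Type*} {G : SimpleGraph V} [Fintype V] (hG : G.Connected)
    {a b c d x z y z' : V} (h : Quad G a b c d) (hne : x ≠ y) (hx : x ∈ ({a, b, c, d} : Set V))
    (hz : z ∉ ({a, b, c, d} : Set V)) (hxz : G.Adj x z) (hy : y ∈ ({a, b, c, d} : Set V))
    (hz' : z' ∉ ({a, b, c, d} : Set V)) (hyz : G.Adj y z') :
    40 * (#G.edgeFinset : ℤ) - 104 ≤ gg G a b + gg G b c + gg G c d + gg G d a := by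
  have hs : ({b, c, d, a} : Set V) = {a, b, c, d} := by ext x; simp; tauto
  have P1 := fun hx hy => quad_pair hG h (x := x) (y := y) hx hz hxz hy hz' hyz
  have P2 := fun hx hy => quad_pair hG h (x := y) (y := x) hx hz' hyz hy hz hxz
  have P3 := fun hx hy => quad_pair hG h.rot (x := x) (y := y) hx (hs ▸ hz) hxz hy (hs ▸ hz') hyz
  have P4 := fun hx hy => quad_pair hG h.rot (x := y) (y := x) hx (hs ▸ hz') hyz hy (hs ▸ hz) hxz
  simp only [Set.mem_insert_iff, Set.mem_singleton_iff] at hx hy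
  by_cases h1 : (x = a ∨ x = d) ∧ (y = b ∨ y = c)
  · exact P1 h1.1 h1.2
  by_cases h2 : (y = a ∨ y = d) ∧ (x = b ∨ x = c)
  · exact P2 h2.1 h2.2
  by_cases h3 : (x = b ∨ x = a) ∧ (y = c ∨ y = d)
  · have := P3 h3.1 h3.2; linarith
  by_cases h4 : (y = b ∨ y = a) ∧ (x = c ∨ x = d)
  · have := P4 h4.1 h4.2; linarith
  exfalso
  rcases hx with rfl | rfl | rfl | rfl <;> rcases hy with rfl | rfl | rfl | rfl <;> simp_all

lemma quad_of_walk {V : Type*} {G : SimpleGraph V} (hQ : CycDisj G) {a : V} {p : G.Walk a a}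
    (hp : p.IsCycle) (h4 : p.length = 4) : ∃ b c d, Quad G a b c d ∧
      p.edges.toFinset = {s(a, b), s(b, c), s(c, d), s(d, a)} ∧
      ∀ x, x ∈ p.support ↔ x ∈ ({a, b, c, d} : Set V) := by
  have hsep := fun x y z => cyc_two hQ hp (x := x) (y := y) (z := z)
  have hch := fun x y => cyc_chord hQ hp (x := x) (y := y)
  rcases p with _ | ⟨h1, p⟩
  · simp at h4
  rename_i b
  rcases p with _ | ⟨h2, p⟩
  · simp at h4
  rename_i c
  rcases p with _ | ⟨h3, p⟩
  · simp at h4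
  rename_i d
  rcases p with _ | ⟨h5, p⟩
  · simp at h4
  rename_i e
  rcases p with _ | ⟨h6, p⟩
  swap
  · simp at h4
  have hac : a ≠ c ∧ b ≠ d := by
    rw [SimpleGraph.Walk.cons_isCycle_iff] at hp
    have := hp.1.support_nodup
    simp at this
    tauto
  have hsup : ∀ x, x ∈ (SimpleGraph.Walk.cons h1 (.cons h2 (.cons h3 (.cons h5 .nil)))).support ↔
      x ∈ ({a, b, c, d} : Set V) := by
    intro x
    simp
    tauto
  refine ⟨b, c, d, ⟨h1, h2, h3, h5, hac.1, hac.2, ?_, ?_, ?_⟩, ?_, hsup⟩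
  · intro h
    have hh := hch a c (by simp) (by simp) h
    clear hch hsep hsup
    have e1 := h1.ne; have e2 := h2.ne; have e3 := h3.ne; have e5 := h5.ne
    simp only [SimpleGraph.Walk.edges_cons, SimpleGraph.Walk.edges_nil, List.mem_cons,
      Sym2.eq_iff, List.not_mem_nil, or_false] at hh
    grind
  · intro h
    have hh := hch b d (by simp) (by simp) h
    clear hch hsep hsup
    have e1 := h1.ne; have e2 := h2.ne; have e3 := h3.ne; have e5 := h5.ne
    simp only [SimpleGraph.Walk.edges_cons, SimpleGraph.Walk.edges_nil, List.mem_cons,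
      Sym2.eq_iff, List.not_mem_nil, or_false] at hh
    grind
  · intro x y z hx hy hz hxz hyz
    refine hsep x y z ((hsup x).2 hx) ((hsup y).2 hy) hxz hyz ?_ ?_
    · intro h
      exact hz ((hsup z).1 (SimpleGraph.Walk.snd_mem_support_of_mem_edges _ h))
    · intro h
      exact hz ((hsup z).1 (SimpleGraph.Walk.snd_mem_support_of_mem_edges _ h))
  · ext e; simp

lemma quad_cycle {V : Type*} {G : SimpleGraph V} [Fintype V] (hG : G.Connected) (hQ : CycDisj G)
    {a : V} {p : G.Walk a a} (hp : p.IsCycle) (h4 : p.length = 4) (hm : 15 < #G.edgeFinset) :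
    ((∃ h, ConcCyc G p.edges.toFinset h) ∧ 0 ≤
    ∑ e ∈ p.edges.toFinset, (ge G e - (2 * (#G.edgeFinset : ℤ) - 1)) - (24 * (#G.edgeFinset : ℤ) - 60)) ∨
    4 * ((#G.edgeFinset : ℤ) - 2) <
    ∑ e ∈ p.edges.toFinset, (ge G e - (2 * (#G.edgeFinset : ℤ) - 1)) - (24 * (#G.edgeFinset : ℤ) - 60) := by
  obtain ⟨b, c, d, hq, he, hs⟩ := quad_of_walk hQ hp h4
  have hsum : ∑ e ∈ p.edges.toFinset, (ge G e - (2 * (#G.edgeFinset : ℤ) - 1)) =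
      gg G a b + gg G b c + gg G c d + gg G d a - 4 * (2 * (#G.edgeFinset : ℤ) - 1) := by
    rw [he]
    have := hq.ab.ne; have := hq.bc.ne; have := hq.cd.ne; have := hq.da.ne
    have := hq.ac; have := hq.bd
    rw [Finset.sum_insert, Finset.sum_insert, Finset.sum_insert, Finset.sum_singleton]
    · simp only [ge_mk]; ring
    all_goals simp only [mem_insert, mem_singleton, Sym2.eq_iff]
    all_goals grind
  rw [hsum]
  have h15 : (15 : ℤ) < #G.edgeFinset := by exact_mod_cast hm
  rcases conc_or hQ hp with h | ⟨x, y, x', y', hne, hx, hy, hx', hy', hxx, hyy⟩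
  · left
    refine ⟨h, ?_⟩
    have h1 := hq.edge hG
    have h2 := hq.rot.edge hG
    have h3 := hq.rot.rot.edge hG
    have h4 := hq.rot.rot.rot.edge hG
    linarith
  · right
    rw [hs] at hx hy hx' hy'
    have := quad_nonconc hG hq hne hx hx' hxx hy hy' hyy
    linarith

/-! ### Part 4: triangles -/

noncomputable def sg {V : Type*} (G : SimpleGraph V) (u v : V) (f : Sym2 V) : ℤ :=
  if eDist G f u < eDist G f v then 1 else if eDist G f v < eDist G f u then -1 else 0

lemma dd_sum {V : Type*} (G : SimpleGraph V) [Fintype V] (u v : V) :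
    dd G u v = ∑ f ∈ G.edgeFinset, sg G u v f := by
  unfold dd mCloser
  simp only [Finset.card_filter]
  push_cast
  rw [← Finset.sum_sub_distrib]
  refine Finset.sum_congr rfl fun f _ => ?_
  unfold sg
  split_ifs <;> first | rfl | omega

lemma eDist_lip {V : Type*} {G : SimpleGraph V} (hG : G.Connected) {u v : V} (h : G.Adj u v)
    (f : Sym2 V) : eDist G f u ≤ eDist G f v + 1 := by
  induction f with | h x y
  rw [eDist_mk, eDist_mk]
  have h1 := hG.dist_triangle (u := x) (v := v) (w := u)
  have h2 := hG.dist_triangle (u := y) (v := v) (w := u)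
  rw [SimpleGraph.dist_eq_one_iff_adj.2 h.symm] at h1 h2
  omega

noncomputable def triX {V : Type*} (G : SimpleGraph V) (a b c : V) (f g : Sym2 V) : ℤ :=
  sg G a b f * sg G a b g + sg G b c f * sg G b c g + sg G c a f * sg G c a g

lemma triX_self {V : Type*} {G : SimpleGraph V} (hG : G.Connected) {a b c : V}
    (hab : G.Adj a b) (hbc : G.Adj b c) (hca : G.Adj c a) (f : Sym2 V) : triX G a b c f f ≤ 2 := by
  have h1 := eDist_lip hG hab f
  have h2 := eDist_lip hG hab.symm f
  have h3 := eDist_lip hG hbc f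
  have h4 := eDist_lip hG hbc.symm f
  have h5 := eDist_lip hG hca f
  have h6 := eDist_lip hG hca.symm f
  unfold triX sg
  split_ifs <;> omega

lemma triX_le {V : Type*} {G : SimpleGraph V} (hG : G.Connected) {a b c : V}
    (hab : G.Adj a b) (hbc : G.Adj b c) (hca : G.Adj c a) (f g : Sym2 V) :
    triX G a b c f g ≤ 2 := by
  have h1 := triX_self hG hab hbc hca f
  have h2 := triX_self hG hab hbc hca g
  unfold triX at *
  nlinarith [sq_nonneg (sg G a b f - sg G a b g), sq_nonneg (sg G b c f - sg G b c g),
    sq_nonneg (sg G c a f - sg G c a g)]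

lemma tri_edist {V : Type*} {G : SimpleGraph V} (hG : G.Connected) {a b x : V}
    (hab : G.Adj a b) (hx : x ≠ b) : eDist G s(a, x) a = 0 ∧ eDist G s(a, x) b = 1 := by
  refine ⟨eDist_left _ _ _, ?_⟩
  have h1 := eDist_le_one (G := G) (a := a) (b := x) (w := b) (Or.inl hab)
  have h2 := eDist_pos hG hab.ne hx
  omega

/-- the three edges of a triangle contribute zero -/
lemma tri_zero {V : Type*} {G : SimpleGraph V} (hG : G.Connected) {a b c : V}
    (hab : G.Adj a b) (hbc : G.Adj b c) (hca : G.Adj c a) :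
    sg G a b s(a, b) + sg G a b s(b, c) + sg G a b s(c, a) = 0 := by
  have h1 := tri_edist hG hab.symm hca.ne
  have h2 := tri_edist hG hab hbc.ne'
  rw [Sym2.eq_swap (a := c) (b := a)]
  unfold sg
  rw [h1.1, h1.2, h2.1, h2.2, eDist_left, eDist_right]
  norm_num

lemma tri_dd {V : Type*} {G : SimpleGraph V} [Fintype V] (hG : G.Connected) {a b c : V}
    (hab : G.Adj a b) (hbc : G.Adj b c) (hca : G.Adj c a) :
    dd G a b = ∑ f ∈ G.edgeFinset \ {s(a, b), s(b, c), s(c, a)}, sg G a b f := by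
  have hsub : ({s(a, b), s(b, c), s(c, a)} : Finset (Sym2 V)) ⊆ G.edgeFinset := by
    intro e he
    simp only [mem_insert, mem_singleton] at he
    rw [SimpleGraph.mem_edgeFinset]
    rcases he with rfl | rfl | rfl
    exacts [hab, hbc, hca]
  rw [dd_sum, ← Finset.sum_sdiff hsub]
  have : ∑ f ∈ ({s(a, b), s(b, c), s(c, a)} : Finset (Sym2 V)), sg G a b f = 0 := by
    have e1 := hab.ne; have e2 := hbc.ne; have e3 := hca.ne
    rw [Finset.sum_insert, Finset.sum_insert, Finset.sum_singleton]
    · have := tri_zero hG hab hbc hca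
      linarith
    all_goals simp only [mem_insert, mem_singleton, Sym2.eq_iff]
    all_goals grind
  rw [this, add_zero]

lemma tri_main {V : Type*} {G : SimpleGraph V} [Fintype V] (hG : G.Connected) {a b c : V}
    (hab : G.Adj a b) (hbc : G.Adj b c) (hca : G.Adj c a) :
    (dd G a b) ^ 2 + (dd G b c) ^ 2 + (dd G c a) ^ 2 =
      ∑ x ∈ (G.edgeFinset \ {s(a, b), s(b, c), s(c, a)}) ×ˢ
        (G.edgeFinset \ {s(a, b), s(b, c), s(c, a)}), triX G a b c x.1 x.2 := by
  have h1 := tri_dd hG hab hbc hca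
  have h2 := tri_dd hG hbc hca hab
  have h3 := tri_dd hG hca hab hbc
  have e2 : ({s(b, c), s(c, a), s(a, b)} : Finset (Sym2 V)) = {s(a, b), s(b, c), s(c, a)} := by
    ext x; simp only [mem_insert, mem_singleton]; tauto
  have e3 : ({s(c, a), s(a, b), s(b, c)} : Finset (Sym2 V)) = {s(a, b), s(b, c), s(c, a)} := by
    ext x; simp only [mem_insert, mem_singleton]; tauto
  rw [e2] at h2
  rw [e3] at h3
  rw [h1, h2, h3, sq, sq, sq, Finset.sum_mul_sum, Finset.sum_mul_sum, Finset.sum_mul_sum,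
    Finset.sum_product, ← Finset.sum_add_distrib, ← Finset.sum_add_distrib]
  refine Finset.sum_congr rfl fun f _ => ?_
  rw [← Finset.sum_add_distrib, ← Finset.sum_add_distrib]
  rfl

lemma tri_card {V : Type*} {G : SimpleGraph V} [Fintype V] {a b c : V}
    (hab : G.Adj a b) (hbc : G.Adj b c) (hca : G.Adj c a) :
    (#(G.edgeFinset \ {s(a, b), s(b, c), s(c, a)}) : ℤ) = #G.edgeFinset - 3 := by
  have hsub : ({s(a, b), s(b, c), s(c, a)} : Finset (Sym2 V)) ⊆ G.edgeFinset := by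
    intro e he
    simp only [mem_insert, mem_singleton] at he
    rw [SimpleGraph.mem_edgeFinset]
    rcases he with rfl | rfl | rfl
    exacts [hab, hbc, hca]
  have h3 : #({s(a, b), s(b, c), s(c, a)} : Finset (Sym2 V)) = 3 := by
    have e1 := hab.ne; have e2 := hbc.ne; have e3 := hca.ne
    rw [Finset.card_insert_of_notMem, Finset.card_insert_of_notMem, Finset.card_singleton]
    all_goals simp only [mem_insert, mem_singleton, Sym2.eq_iff]
    all_goals grind
  have := Finset.card_sdiff_add_card_eq_card hsub
  omega

lemma tri_bound {V : Type*} {G : SimpleGraph V} [Fintype V] (hG : G.Connected) {a b c : V}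
    (hab : G.Adj a b) (hbc : G.Adj b c) (hca : G.Adj c a) :
    (dd G a b) ^ 2 + (dd G b c) ^ 2 + (dd G c a) ^ 2 ≤ 2 * ((#G.edgeFinset : ℤ) - 3) ^ 2 := by
  rw [tri_main hG hab hbc hca]
  have := Finset.sum_le_card_nsmul ((G.edgeFinset \ {s(a, b), s(b, c), s(c, a)}) ×ˢ
        (G.edgeFinset \ {s(a, b), s(b, c), s(c, a)})) (fun x => triX G a b c x.1 x.2) 2
        (fun x _ => triX_le hG hab hbc hca _ _)
  rw [nsmul_eq_mul, Finset.card_product] at this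
  push_cast at this
  rw [tri_card hab hbc hca] at this
  linarith

lemma sum_aux {α : Type*} (S : Finset α) (F : α → α → ℤ) (c : ℤ) (hle : ∀ f g, F f g ≤ 2)
    {f g : α} (hf : f ∈ S) (hg : g ∈ S) (h : F f g < 2) (hc : (#S : ℤ) = c) :
    ∑ x ∈ S ×ˢ S, F x.1 x.2 < 2 * c ^ 2 := by
  have := Finset.sum_lt_sum (s := S ×ˢ S) (f := fun x => F x.1 x.2)
        (g := fun _ => (2 : ℤ)) (fun x _ => hle _ _)
        ⟨(f, g), mem_product.2 ⟨hf, hg⟩, h⟩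
  rw [Finset.sum_const, nsmul_eq_mul, Finset.card_product] at this
  push_cast at this
  rw [hc] at this
  linarith

lemma tri_strict {V : Type*} {G : SimpleGraph V} [Fintype V] (hG : G.Connected) {a b c x y : V}
    (hab : G.Adj a b) (hbc : G.Adj b c) (hca : G.Adj c a) (hx : G.Adj a x) (hy : G.Adj b y)
    (xb : x ≠ b) (xc : x ≠ c) (ya : y ≠ a) (yc : y ≠ c) :
    (dd G a b) ^ 2 + (dd G b c) ^ 2 + (dd G c a) ^ 2 < 2 * ((#G.edgeFinset : ℤ) - 3) ^ 2 := by
  rw [tri_main hG hab hbc hca]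
  have e1 := hab.ne; have e2 := hbc.ne; have e3 := hca.ne
  have hfm : s(a, x) ∈ G.edgeFinset \ {s(a, b), s(b, c), s(c, a)} := by
    rw [mem_sdiff, SimpleGraph.mem_edgeFinset]
    refine ⟨hx, ?_⟩
    simp only [mem_insert, mem_singleton, Sym2.eq_iff]
    grind
  have hgm : s(b, y) ∈ G.edgeFinset \ {s(a, b), s(b, c), s(c, a)} := by
    rw [mem_sdiff, SimpleGraph.mem_edgeFinset]
    refine ⟨hy, ?_⟩
    simp only [mem_insert, mem_singleton, Sym2.eq_iff]
    grind
  have hlt : triX G a b c s(a, x) s(b, y) < 2 := by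
    have h1 := tri_edist hG hab xb
    have h2 := tri_edist hG hca.symm xc
    have h3 := tri_edist hG hab.symm ya
    have h4 := tri_edist hG hbc yc
    unfold triX sg
    rw [h1.1, h1.2, h2.2, h3.1, h3.2, h4.2]
    norm_num
  have hc := tri_card hab hbc hca
  have hle := triX_le hG hab hbc hca
  exact sum_aux _ _ _ hle hfm hgm hlt hc

lemma tri_of_walk {V : Type*} {G : SimpleGraph V} {a : V} {p : G.Walk a a}
    (hp : p.IsCycle) (h3 : p.length = 3) : ∃ b c, G.Adj a b ∧ G.Adj b c ∧ G.Adj c a ∧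
      p.edges.toFinset = {s(a, b), s(b, c), s(c, a)} ∧
      ∀ x, x ∈ p.support ↔ x = a ∨ x = b ∨ x = c := by
  rcases p with _ | ⟨h1, p⟩
  · simp at h3
  rename_i b
  rcases p with _ | ⟨h2, p⟩
  · simp at h3
  rename_i c
  rcases p with _ | ⟨h4, p⟩
  · simp at h3
  rename_i d
  rcases p with _ | ⟨h5, p⟩
  swap
  · simp at h3
  refine ⟨b, c, h1, h2, h4, ?_, ?_⟩
  · ext e; simp
  · intro x; simp; tauto

lemma tri_cycle {V : Type*} {G : SimpleGraph V} [Fintype V] (hG : G.Connected) (hQ : CycDisj G)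
    {a : V} {p : G.Walk a a} (hp : p.IsCycle) (h3 : p.length = 3) :
    ((#G.edgeFinset : ℤ) - 3) * ((#G.edgeFinset : ℤ) - 15) ≤
      ∑ e ∈ p.edges.toFinset, (ge G e - (2 * (#G.edgeFinset : ℤ) - 1)) - (24 * (#G.edgeFinset : ℤ) - 60) ∧
    ((∃ h, ConcCyc G p.edges.toFinset h) ∨
    ((#G.edgeFinset : ℤ) - 3) * ((#G.edgeFinset : ℤ) - 15) <
      ∑ e ∈ p.edges.toFinset, (ge G e - (2 * (#G.edgeFinset : ℤ) - 1)) - (24 * (#G.edgeFinset : ℤ) - 60)) := by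
  obtain ⟨b, c, hab, hbc, hca, he, hs⟩ := tri_of_walk hp h3
  have hsum : ∑ e ∈ p.edges.toFinset, (ge G e - (2 * (#G.edgeFinset : ℤ) - 1)) =
      3 * (#G.edgeFinset : ℤ) ^ 2 - ((dd G a b) ^ 2 + (dd G b c) ^ 2 + (dd G c a) ^ 2)
        - 3 * (2 * (#G.edgeFinset : ℤ) - 1) := by
    rw [he]
    have e1 := hab.ne; have e2 := hbc.ne; have e3 := hca.ne
    rw [Finset.sum_insert, Finset.sum_insert, Finset.sum_singleton]
    · simp only [ge_mk, gg]; ring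
    all_goals simp only [mem_insert, mem_singleton, Sym2.eq_iff]
    all_goals grind
  rw [hsum]
  refine ⟨?_, ?_⟩
  · have := tri_bound hG hab hbc hca
    nlinarith
  rcases conc_or hQ hp with h | ⟨x, y, x', y', hne, hx, hy, hx', hy', hxx, hyy⟩
  · left; exact h
  · right
    rw [hs] at hx hy hx' hy'
    push Not at hx' hy'
    have key : (dd G a b) ^ 2 + (dd G b c) ^ 2 + (dd G c a) ^ 2 < 2 * ((#G.edgeFinset : ℤ) - 3) ^ 2 := by
      obtain ⟨x1, x2, x3⟩ := hx'
      obtain ⟨y1, y2, y3⟩ := hy'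
      rcases hx with rfl | rfl | rfl <;> rcases hy with rfl | rfl | rfl
      · exact absurd rfl hne
      · have := tri_strict hG hab hbc hca hxx hyy x2 x3 y1 y3; linarith
      · have := tri_strict hG hca hab hbc hyy hxx y1 y2 x3 x2; linarith
      · have := tri_strict hG hab hbc hca hyy hxx y2 y3 x1 x3; linarith
      · exact absurd rfl hne
      · have := tri_strict hG hbc hca hab hxx hyy x3 x1 y2 y1; linarith
      · have := tri_strict hG hca hab hbc hxx hyy x1 x2 y3 y2; linarith
      · have := tri_strict hG hbc hca hab hyy hxx y3 y1 x2 x1; linarith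
      · exact absurd rfl hne
    nlinarith

/-! ### Part 5: bridges, decomposition of the sum, numerical conclusion -/

noncomputable def Brd {V : Type*} [Fintype V] (G : SimpleGraph V) : Finset (Sym2 V) :=
  G.edgeFinset.filter fun e => ∀ C ∈ cycs G, e ∉ C

lemma brd_isBridge {V : Type*} [Fintype V] {G : SimpleGraph V} {e : Sym2 V} (h : e ∈ Brd G) :
    e ∈ G.edgeSet ∧ G.IsBridge e := by
  unfold Brd at h
  rw [mem_filter, SimpleGraph.mem_edgeFinset] at h
  refine ⟨h.1, ?_⟩
  rw [SimpleGraph.isBridge_iff_forall_cycle_notMem h.1]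
  intro u p hp he
  exact h.2 p.edges.toFinset ((mem_cycs _ _).2 ⟨u, p, hp, rfl⟩) (List.mem_toFinset.2 he)

def Pend {V : Type*} (G : SimpleGraph V) (e : Sym2 V) : Prop :=
  ∃ u v, e = s(u, v) ∧ ∀ w, G.Adj v w → w = u

def Inner2 {V : Type*} (G : SimpleGraph V) (e : Sym2 V) : Prop :=
  ∃ u v w, e = s(u, v) ∧ w ≠ u ∧ G.Adj v w ∧ (∀ x, G.Adj v x → x = u ∨ x = w) ∧
    ∀ x, G.Adj w x → x = v

lemma inner2_of {V : Type*} {G : SimpleGraph V} [Fintype V] (hG : G.Connected) {u v v' : V}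
    (h : G.Adj u v) (hb : G.IsBridge s(u, v)) (hv : G.Adj v v') (hv' : v' ≠ u)
    (hc : mCloser G v u ≤ 1) : Inner2 G s(u, v) := by
  rw [SimpleGraph.isBridge_iff] at hb
  have hvu := h.ne
  have nav : ¬ G.Adj v' u := by
    intro h'
    apply hb
    refine (SimpleGraph.Adj.reachable (v := v') ?_).trans (SimpleGraph.Adj.reachable ?_)
    · rw [SimpleGraph.deleteEdges_adj]
      refine ⟨h'.symm, ?_⟩
      simp only [Set.mem_singleton_iff, Sym2.eq_iff]
      have := hv.ne
      grind
    · rw [SimpleGraph.deleteEdges_adj]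
      refine ⟨hv.symm, ?_⟩
      simp only [Set.mem_singleton_iff, Sym2.eq_iff]
      grind
  refine ⟨u, v, v', rfl, hv', hv, ?_, ?_⟩
  · intro x hx
    by_contra! hxn
    have : 2 ≤ mCloser G v u := by
      have hcard : #({s(v, v'), s(v, x)} : Finset (Sym2 V)) = 2 := by
        rw [Finset.card_pair]
        simp only [Ne, Sym2.eq_iff]
        have := hv.ne
        grind
      rw [← hcard]
      refine closer_ge G v u _ ?_
      intro f hf
      simp only [mem_insert, mem_singleton] at hf
      rcases hf with rfl | rfl
      · refine ⟨hv, ?_⟩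
        rw [eDist_left]
        exact eDist_pos hG hvu.symm hv'
      · refine ⟨hx, ?_⟩
        rw [eDist_left]
        exact eDist_pos hG hvu.symm hxn.1
    omega
  · intro x hx
    by_contra hxn
    have hxu : x ≠ u := by
      rintro rfl
      exact nav hx
    have nxu : ¬ G.Adj x u := by
      intro h'
      apply hb
      refine (SimpleGraph.Adj.reachable (v := x) ?_).trans
        ((SimpleGraph.Adj.reachable (v := v') ?_).trans (SimpleGraph.Adj.reachable ?_))
      · rw [SimpleGraph.deleteEdges_adj]
        refine ⟨h'.symm, ?_⟩
        simp only [Set.mem_singleton_iff, Sym2.eq_iff]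
        grind
      · rw [SimpleGraph.deleteEdges_adj]
        refine ⟨hx.symm, ?_⟩
        simp only [Set.mem_singleton_iff, Sym2.eq_iff]
        grind
      · rw [SimpleGraph.deleteEdges_adj]
        refine ⟨hv.symm, ?_⟩
        simp only [Set.mem_singleton_iff, Sym2.eq_iff]
        grind
    have : 2 ≤ mCloser G v u := by
      have hcard : #({s(v, v'), s(v', x)} : Finset (Sym2 V)) = 2 := by
        rw [Finset.card_pair]
        simp only [Ne, Sym2.eq_iff]
        have := hv.ne
        grind
      rw [← hcard]
      refine closer_ge G v u _ ?_
      intro f hf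
      simp only [mem_insert, mem_singleton] at hf
      rcases hf with rfl | rfl
      · refine ⟨hv, ?_⟩
        rw [eDist_left]
        exact eDist_pos hG hvu.symm hv'
      · refine ⟨hx, ?_⟩
        have h1 := eDist_le_one (G := G) (a := v') (b := x) (w := v) (Or.inl hv.symm)
        have h2 := eDist_ge_two hG (a := v') (b := x) (w := u) hv' hxu nav nxu
        omega
    omega

noncomputable def bexc {V : Type*} [Fintype V] (G : SimpleGraph V) (e : Sym2 V) : ℤ :=
  ge G e - (2 * (#G.edgeFinset : ℤ) - 1)

noncomputable def cexc {V : Type*} [Fintype V] (G : SimpleGraph V) (C : Finset (Sym2 V)) : ℤ :=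
  ∑ e ∈ C, (ge G e - (2 * (#G.edgeFinset : ℤ) - 1)) - (24 * (#G.edgeFinset : ℤ) - 60)

lemma bexc_nonneg {V : Type*} [Fintype V] {G : SimpleGraph V} {e : Sym2 V} (h : e ∈ G.edgeSet) :
    0 ≤ bexc G e := by
  induction e with | h u v
  have := gg_ge_base (G := G) (u := u) (v := v) h
  unfold bexc
  rw [ge_mk]
  linarith

lemma bexc_cases {V : Type*} [Fintype V] {G : SimpleGraph V} (hG : G.Connected)
    (hm : 15 < #G.edgeFinset) {e : Sym2 V}
    (h : e ∈ Brd G) : Pend G e ∨ (4 * ((#G.edgeFinset : ℤ) - 2) ≤ bexc G e ∧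
      (bexc G e = 4 * ((#G.edgeFinset : ℤ) - 2) → Inner2 G e)) := by
  obtain ⟨h1, h2⟩ := brd_isBridge h
  by_cases hp : Pend G e
  · left; exact hp
  right
  induction e with | h u v
  have huv : G.Adj u v := h1
  have hv : ∃ v', G.Adj v v' ∧ v' ≠ u := by
    by_contra! hc
    exact hp ⟨u, v, rfl, hc⟩
  have hu : ∃ u', G.Adj u u' ∧ u' ≠ v := by
    by_contra! hc
    exact hp ⟨v, u, Sym2.eq_swap, hc⟩
  obtain ⟨v', hv, hv'⟩ := hv
  obtain ⟨u', hu, hu'⟩ := hu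
  have h3 := gg_ge_inner hG huv hu hu' hv hv'
  unfold bexc
  rw [ge_mk]
  refine ⟨by linarith, fun heq => ?_⟩
  rcases gg_inner_eq huv hm (by linarith) with h4 | h4
  · rw [Sym2.eq_swap]
    rw [Sym2.eq_swap] at h2
    exact inner2_of hG huv.symm h2 hu hu' h4
  · exact inner2_of hG huv h2 hv hv' h4

lemma cyc_sum {V : Type*} [Fintype V] {G : SimpleGraph V} (hQ : CycDisj G) :
    ∑ e ∈ G.edgeFinset, ge G e = (#G.edgeFinset : ℤ) * (2 * (#G.edgeFinset : ℤ) - 1) +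
      (#(cycs G) : ℤ) * (24 * (#G.edgeFinset : ℤ) - 60) +
      (∑ e ∈ Brd G, bexc G e + ∑ C ∈ cycs G, cexc G C) := by
  have h1 : ∑ e ∈ G.edgeFinset, (ge G e - (2 * (#G.edgeFinset : ℤ) - 1)) =
      ∑ e ∈ Brd G, bexc G e + ∑ C ∈ cycs G, ∑ e ∈ C, (ge G e - (2 * (#G.edgeFinset : ℤ) - 1)) := by
    have hd : Set.PairwiseDisjoint (↑(cycs G) : Set (Finset (Sym2 V))) id := by
      intro C hC D hD hne
      rw [Function.onFun, Finset.disjoint_left]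
      intro e he he'
      exact hne (hQ ((mem_cycs _ _).1 hC) ((mem_cycs _ _).1 hD) e he he')
    have h2 := Finset.sum_biUnion (f := fun e => ge G e - (2 * (#G.edgeFinset : ℤ) - 1)) hd
    simp only [id] at h2
    rw [← h2]
    unfold bexc
    rw [← Finset.sum_union]
    · refine Finset.sum_congr ?_ fun _ _ => rfl
      ext e
      simp only [Brd, mem_union, mem_filter, mem_biUnion]
      constructor
      · intro h
        by_cases hc : ∃ C ∈ cycs G, e ∈ C
        · right; exact hc
        · left; push Not at hc; exact ⟨h, hc⟩
      · rintro (h | ⟨C, hC, he⟩)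
        · exact h.1
        · rw [SimpleGraph.mem_edgeFinset]
          exact isCyc_sub ((mem_cycs _ _).1 hC) e he
    · rw [Finset.disjoint_left]
      intro e he he'
      rw [mem_biUnion] at he'
      obtain ⟨C, hC, he'⟩ := he'
      exact (mem_filter.1 he).2 C hC he'
  have h3 : ∑ C ∈ cycs G, cexc G C =
      ∑ C ∈ cycs G, ∑ e ∈ C, (ge G e - (2 * (#G.edgeFinset : ℤ) - 1)) -
      (#(cycs G) : ℤ) * (24 * (#G.edgeFinset : ℤ) - 60) := by
    unfold cexc
    rw [Finset.sum_sub_distrib, Finset.sum_const, nsmul_eq_mul]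
  rw [Finset.sum_sub_distrib, Finset.sum_const, nsmul_eq_mul] at h1
  linarith

lemma pick {ι : Type*} (s : Finset ι) (F : ι → ℤ) (good special : ι → Prop) (T : ℤ) (hT : 0 < T)
    (h0 : ∀ i ∈ s, 0 ≤ F i) (h : ∀ i ∈ s, good i ∨ T ≤ F i)
    (hs : ∀ i ∈ s, F i = T → good i ∨ special i) :
    (∀ i ∈ s, good i) ∨ (T ≤ ∑ i ∈ s, F i ∧ (∑ i ∈ s, F i = T →
      ∃ i₀ ∈ s, special i₀ ∧ ∀ i ∈ s, i ≠ i₀ → good i)) := by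
  by_cases hg : ∀ i ∈ s, good i
  · left; exact hg
  right
  push Not at hg
  obtain ⟨i₀, hi, hng⟩ := hg
  have h1 := Finset.add_sum_erase s F hi
  have h2 : ∀ i ∈ s.erase i₀, 0 ≤ F i := fun i hi => h0 i (mem_of_mem_erase hi)
  have h3 := Finset.sum_nonneg h2
  have h4 : T ≤ F i₀ := (h i₀ hi).resolve_left hng
  refine ⟨by linarith, fun heq => ⟨i₀, hi, ?_, ?_⟩⟩
  · exact (hs i₀ hi (by linarith)).resolve_left hng
  · intro i hi' hne
    have h5 := Finset.single_le_sum h2 (mem_erase.2 ⟨hne, hi'⟩)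
    rcases h i hi' with h6 | h6
    · exact h6
    · exfalso; linarith

def ConcN {V : Type*} (G : SimpleGraph V) (N : ℕ) (C : Finset (Sym2 V)) : Prop :=
  #C = N ∧ ∃ h, ConcCyc G C h

lemma cexc_cases {V : Type*} [Fintype V] {G : SimpleGraph V} (hG : G.Connected) (hQ : CycDisj G)
    (hm : 15 < #G.edgeFinset) {C : Finset (Sym2 V)} (h : C ∈ cycs G) :
    (ConcN G 4 C ∧ 0 ≤ cexc G C) ∨ 4 * ((#G.edgeFinset : ℤ) - 2) < cexc G C ∨
    (((#G.edgeFinset : ℤ) - 3) * ((#G.edgeFinset : ℤ) - 15) ≤ cexc G C ∧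
      (cexc G C = ((#G.edgeFinset : ℤ) - 3) * ((#G.edgeFinset : ℤ) - 15) → ConcN G 3 C)) := by
  rw [mem_cycs] at h
  obtain ⟨a, p, hp, rfl⟩ := h
  have h3 := hp.three_le_length
  rcases Nat.lt_or_ge p.length 4 with h4 | h4
  · right; right
    have := tri_cycle hG hQ hp (by omega)
    refine ⟨this.1, fun heq => ⟨by rw [cyc_card hp]; omega, ?_⟩⟩
    refine this.2.resolve_right ?_
    unfold cexc at heq
    exact heq.le.not_gt
  rcases Nat.lt_or_ge p.length 5 with h5 | h5
  · rcases quad_cycle hG hQ hp (by omega) hm with h6 | h6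
    · left
      exact ⟨⟨by rw [cyc_card hp]; omega, h6.1⟩, h6.2⟩
    · right; left
      exact h6
  · right; left
    exact long_cycle hG hQ hp h5 hm

noncomputable def excS {V : Type*} [Fintype V] (G : SimpleGraph V) : ℤ :=
  ∑ e ∈ Brd G, bexc G e + ∑ C ∈ cycs G, cexc G C

lemma num_A {V : Type*} [Fintype V] {G : SimpleGraph V} (hG : G.Connected) (hQ : CycDisj G)
    (hm : 20 ≤ #G.edgeFinset) :
    ((∀ e ∈ Brd G, Pend G e) ∧ ∀ C ∈ cycs G, ConcN G 4 C) ∨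
    (4 * ((#G.edgeFinset : ℤ) - 2) ≤ excS G ∧ (excS G = 4 * ((#G.edgeFinset : ℤ) - 2) →
      ∃ e₀ ∈ Brd G, Inner2 G e₀ ∧ (∀ e ∈ Brd G, e ≠ e₀ → Pend G e) ∧
        ∀ C ∈ cycs G, ConcN G 4 C)) := by
  have hm' : (20 : ℤ) ≤ #G.edgeFinset := by exact_mod_cast hm
  have := pick ((Brd G).disjSum (cycs G)) (Sum.elim (bexc G) (cexc G))
    (Sum.elim (Pend G) (ConcN G 4)) (Sum.elim (Inner2 G) fun _ => False)
    (4 * ((#G.edgeFinset : ℤ) - 2)) (by linarith) ?_ ?_ ?_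
  · rw [Finset.sum_disjSum] at this
    simp only [Sum.elim_inl, Sum.elim_inr] at this
    rcases this with h | ⟨h1, h2⟩
    · left
      exact ⟨fun e he => h (Sum.inl e) (by simpa using he),
        fun C hC => h (Sum.inr C) (by simpa using hC)⟩
    · right
      refine ⟨h1, fun heq => ?_⟩
      obtain ⟨i, hi, hs, ho⟩ := h2 heq
      rcases i with e | C
      · refine ⟨e, by simpa using hi, hs, fun e' he' hne => ho (Sum.inl e') (by simpa using he') (by simpa using hne),
          fun C hC => ho (Sum.inr C) (by simpa using hC) (by simp)⟩
      · exact hs.elim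
  · rintro (e | C) hi
    · exact bexc_nonneg (brd_isBridge (by simpa using hi)).1
    · rcases cexc_cases hG hQ (by omega) (C := C) (by simpa using hi) with h | h | h
      · exact h.2
      · simp only [Sum.elim_inr]; linarith
      · simp only [Sum.elim_inr]; nlinarith [h.1]
  · rintro (e | C) hi
    · rcases bexc_cases hG (by omega) (e := e) (by simpa using hi) with h | h
      · left; exact h
      · right; exact h.1
    · rcases cexc_cases hG hQ (by omega) (C := C) (by simpa using hi) with h | h | h
      · left; exact h.1
      · right; exact h.le
      · right; simp only [Sum.elim_inr]; nlinarith [h.1]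
  · rintro (e | C) hi heq
    · rcases bexc_cases hG (by omega) (e := e) (by simpa using hi) with h | h
      · left; exact h
      · right; exact h.2 heq
    · simp only [Sum.elim_inr] at heq
      rcases cexc_cases hG hQ (by omega) (C := C) (by simpa using hi) with h | h | h
      · left; exact h.1
      · exfalso; linarith
      · exfalso; nlinarith [h.1]

lemma num_B {V : Type*} [Fintype V] {G : SimpleGraph V} (hG : G.Connected) (hQ : CycDisj G)
    (hm : 15 < #G.edgeFinset) (hm2 : #G.edgeFinset ≤ 19) :
    ((∀ e ∈ Brd G, Pend G e) ∧ ∀ C ∈ cycs G, ConcN G 4 C) ∨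
    (((#G.edgeFinset : ℤ) - 3) * ((#G.edgeFinset : ℤ) - 15) ≤ excS G ∧
      (excS G = ((#G.edgeFinset : ℤ) - 3) * ((#G.edgeFinset : ℤ) - 15) →
      ∃ C₀ ∈ cycs G, ConcN G 3 C₀ ∧ (∀ e ∈ Brd G, Pend G e) ∧
        ∀ C ∈ cycs G, C ≠ C₀ → ConcN G 4 C)) := by
  have hm' : (15 : ℤ) < #G.edgeFinset := by exact_mod_cast hm
  have hm2' : (#G.edgeFinset : ℤ) ≤ 19 := by exact_mod_cast hm2
  have hlt : ((#G.edgeFinset : ℤ) - 3) * ((#G.edgeFinset : ℤ) - 15) < 4 * ((#G.edgeFinset : ℤ) - 2) := by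
    nlinarith
  have hT : 0 < ((#G.edgeFinset : ℤ) - 3) * ((#G.edgeFinset : ℤ) - 15) := by
    apply mul_pos <;> linarith
  have := pick ((Brd G).disjSum (cycs G)) (Sum.elim (bexc G) (cexc G))
    (Sum.elim (Pend G) (ConcN G 4)) (Sum.elim (fun _ => False) (ConcN G 3))
    (((#G.edgeFinset : ℤ) - 3) * ((#G.edgeFinset : ℤ) - 15)) hT ?_ ?_ ?_
  · rw [Finset.sum_disjSum] at this
    simp only [Sum.elim_inl, Sum.elim_inr] at this
    rcases this with h | ⟨h1, h2⟩
    · left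
      exact ⟨fun e he => h (Sum.inl e) (by simpa using he),
        fun C hC => h (Sum.inr C) (by simpa using hC)⟩
    · right
      refine ⟨h1, fun heq => ?_⟩
      obtain ⟨i, hi, hs, ho⟩ := h2 heq
      rcases i with e | C
      · exact hs.elim
      · refine ⟨C, by simpa using hi, hs, fun e' he' => ho (Sum.inl e') (by simpa using he') (by simp),
          fun C' hC hne => ho (Sum.inr C') (by simpa using hC) (by simpa using hne)⟩
  · rintro (e | C) hi
    · exact bexc_nonneg (brd_isBridge (by simpa using hi)).1
    · rcases cexc_cases hG hQ (by omega) (C := C) (by simpa using hi) with h | h | h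
      · exact h.2
      · simp only [Sum.elim_inr]; linarith
      · simp only [Sum.elim_inr]; linarith [h.1]
  · rintro (e | C) hi
    · rcases bexc_cases hG (by omega) (e := e) (by simpa using hi) with h | h
      · left; exact h
      · right; simp only [Sum.elim_inl]; linarith [h.1]
    · rcases cexc_cases hG hQ (by omega) (C := C) (by simpa using hi) with h | h | h
      · left; exact h.1
      · right; simp only [Sum.elim_inr]; linarith
      · right; exact h.1
  · rintro (e | C) hi heq
    · simp only [Sum.elim_inl] at heq
      rcases bexc_cases hG (by omega) (e := e) (by simpa using hi) with h | h
      · left; exact h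
      · exfalso; linarith [h.1]
    · simp only [Sum.elim_inr] at heq
      rcases cexc_cases hG hQ (by omega) (C := C) (by simpa using hi) with h | h | h
      · left; exact h.1
      · exfalso; linarith
      · right; exact h.2 heq

/-! ### Part 6: exact values of contributions for concentrated pieces -/

lemma last_step {V : Type*} {G : SimpleGraph V} (hG : G.Connected) {x y : V} (h : x ≠ y) :
    ∃ z, G.Adj y z ∧ G.dist x z + 1 = G.dist x y := by
  obtain ⟨p, hp⟩ := hG.exists_walk_length_eq_dist x y
  have hnn : ¬ p.Nil := fun hn => h hn.eq
  refine ⟨p.penultimate, (p.adj_penultimate hnn).symm, ?_⟩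
  have h1 : G.dist x p.penultimate ≤ p.dropLast.length := SimpleGraph.dist_le _
  have h2 : p.dropLast.length + 1 = p.length := by
    have := p.length_dropLast_add_one hnn
    exact this
  have h3 := hG.dist_triangle (u := x) (v := p.penultimate) (w := y)
  rw [SimpleGraph.dist_eq_one_iff_adj.2 (p.adj_penultimate hnn)] at h3
  omega

lemma dist_lip {V : Type*} {G : SimpleGraph V} (hG : G.Connected) {u v : V} (h : G.Adj u v)
    (x : V) : G.dist x u ≤ G.dist x v + 1 ∧ G.dist x v ≤ G.dist x u + 1 := by
  have h1 := hG.dist_triangle (u := x) (v := v) (w := u)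
  have h2 := hG.dist_triangle (u := x) (v := u) (w := v)
  rw [SimpleGraph.dist_eq_one_iff_adj.2 h.symm] at h1
  rw [SimpleGraph.dist_eq_one_iff_adj.2 h] at h2
  omega

lemma gg_le {V : Type*} (G : SimpleGraph V) [Fintype V] (u v : V) (T : Finset (Sym2 V)) (q : ℕ)
    (hq : q ≤ mEqui G u v)
    (hT : ∀ f ∈ G.edgeFinset, f ∉ T → eDist G f u < eDist G f v)
    (hp : 2 * #T ≤ #G.edgeFinset + q) :
    gg G u v ≤ (#G.edgeFinset : ℤ) ^ 2 - ((#G.edgeFinset : ℤ) - 2 * #T + q) ^ 2 := by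
  have h1 : #(G.edgeFinset \ T) ≤ mCloser G u v := by
    refine closer_ge G u v _ fun f hf => ?_
    rw [mem_sdiff] at hf
    exact ⟨SimpleGraph.mem_edgeFinset.1 hf.1, hT f hf.1 hf.2⟩
  have h2 : #G.edgeFinset - #T ≤ #(G.edgeFinset \ T) := Finset.le_card_sdiff _ _
  have h3 := closer_sum G u v
  have h4 : (#G.edgeFinset : ℤ) - 2 * #T + q ≤ dd G u v := by
    unfold dd
    omega
  unfold gg
  have h5 : (0 : ℤ) ≤ (#G.edgeFinset : ℤ) - 2 * #T + q := by omega
  nlinarith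

lemma val_pend {V : Type*} {G : SimpleGraph V} [Fintype V] (hG : G.Connected) {h x : V}
    (hm : 15 < #G.edgeFinset) (hx : G.Adj h x) (hN : ∀ y, G.Adj x y → y = h) :
    gg G h x ≤ 2 * (#G.edgeFinset : ℤ) - 1 := by
  have := gg_le G h x {s(h, x)} 1 (equi_one hx) ?_ (by rw [card_singleton]; omega)
  · rw [card_singleton] at this
    push_cast at this
    nlinarith
  · intro f hf hf'
    induction f with | h a b
    rw [SimpleGraph.mem_edgeFinset] at hf
    have hab : G.Adj a b := hf
    rw [mem_singleton] at hf'
    have ha : a ≠ x := by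
      rintro rfl
      rw [hN b hab] at hf'
      exact hf' Sym2.eq_swap
    have hb : b ≠ x := by
      rintro rfl
      rw [hN a hab.symm] at hf'
      exact hf' rfl
    obtain ⟨z, hz, hz'⟩ := last_step hG ha
    obtain ⟨w, hw, hw'⟩ := last_step hG hb
    rw [hN z hz] at hz'
    rw [hN w hw] at hw'
    rw [eDist_mk, eDist_mk]
    omega

lemma val_path {V : Type*} {G : SimpleGraph V} [Fintype V] (hG : G.Connected) {h v w : V}
    (hm : 15 < #G.edgeFinset) (hv : G.Adj h v) (hw : G.Adj v w) (hwh : w ≠ h)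
    (hN : ∀ y, G.Adj v y → y = h ∨ y = w)
    (hN' : ∀ y, G.Adj w y → y = v) :
    gg G h v ≤ 6 * (#G.edgeFinset : ℤ) - 9 := by
  have hc : #({s(h, v), s(v, w)} : Finset (Sym2 V)) ≤ 2 := Finset.card_le_two
  have := gg_le G h v {s(h, v), s(v, w)} 1 (equi_one hv) ?_ (by omega)
  · have hc' : (#({s(h, v), s(v, w)} : Finset (Sym2 V)) : ℤ) ≤ 2 := by exact_mod_cast hc
    have hm' : (15 : ℤ) < #G.edgeFinset := by exact_mod_cast hm
    push_cast at this
    nlinarith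
  · intro f hf hf'
    induction f with | h a b
    rw [SimpleGraph.mem_edgeFinset] at hf
    have hab : G.Adj a b := hf
    simp only [mem_insert, mem_singleton, Sym2.eq_iff] at hf'
    have key : ∀ a, a ≠ v → a ≠ w → G.dist a h < G.dist a v := by
      intro a h1 h2
      obtain ⟨z, hz, hz'⟩ := last_step hG h1
      obtain ⟨y, hy, hy'⟩ := last_step hG h2
      rw [hN' y hy] at hy'
      rcases hN z hz with rfl | rfl <;> omega
    have e1 := hN a; have e2 := hN b; have e3 := hN' a; have e4 := hN' b
    have ha : a ≠ v ∧ a ≠ w ∧ b ≠ v ∧ b ≠ w := by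
      have := hab.symm
      grind
    have h1 := key a ha.1 ha.2.1
    have h2 := key b ha.2.2.1 ha.2.2.2
    rw [eDist_mk, eDist_mk]
    omega

lemma val_tri {V : Type*} {G : SimpleGraph V} [Fintype V] (hG : G.Connected) {h a c : V}
    (hm : 15 < #G.edgeFinset) (hha : G.Adj h a) (hac : G.Adj a c) (hch : G.Adj c h)
    (hN : ∀ y, G.Adj a y → y = h ∨ y = c)
    (hN' : ∀ y, G.Adj c y → y = a ∨ y = h) :
    gg G h a ≤ 6 * (#G.edgeFinset : ℤ) - 9 := by
  have hc : #({s(h, a), s(a, c)} : Finset (Sym2 V)) ≤ 2 := Finset.card_le_two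
  have := gg_le G h a {s(h, a), s(a, c)} 1 (equi_one hha) ?_ (by omega)
  · have hc' : (#({s(h, a), s(a, c)} : Finset (Sym2 V)) : ℤ) ≤ 2 := by exact_mod_cast hc
    have hm' : (15 : ℤ) < #G.edgeFinset := by exact_mod_cast hm
    push_cast at this
    nlinarith
  · intro f hf hf'
    induction f with | h x y
    rw [SimpleGraph.mem_edgeFinset] at hf
    have hxy : G.Adj x y := hf
    simp only [mem_insert, mem_singleton, Sym2.eq_iff] at hf'
    have key : ∀ x, x ≠ a → x ≠ c → G.dist x h < G.dist x a := by
      intro x h1 h2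
      obtain ⟨z, hz, hz'⟩ := last_step hG h1
      obtain ⟨y, hy, hy'⟩ := last_step hG h2
      have l1 := dist_lip hG hha x
      have l2 := dist_lip hG hch x
      rcases hN z hz with rfl | rfl <;> rcases hN' y hy with rfl | rfl <;> omega
    by_cases hs : s(x, y) = s(c, h)
    · rw [hs, eDist_right]
      exact eDist_pos hG hac.ne' hha.ne
    rw [Sym2.eq_iff] at hs
    have e1 := hN x; have e2 := hN y; have e3 := hN' x; have e4 := hN' y
    have ha : x ≠ a ∧ x ≠ c ∧ y ≠ a ∧ y ≠ c := by
      have := hxy.symm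
      have := hha.ne; have := hac.ne; have := hch.ne
      grind
    have h1 := key x ha.1 ha.2.1
    have h2 := key y ha.2.2.1 ha.2.2.2
    rw [eDist_mk, eDist_mk]
    omega

/-- a concentrated quadrangle with hub `h` -/
structure CQuad {V : Type*} (G : SimpleGraph V) (h a b c : V) : Prop where
  ha : G.Adj h a
  ab : G.Adj a b
  bc : G.Adj b c
  ch : G.Adj c h
  nhb : h ≠ b
  nac : a ≠ c
  Na : ∀ y, G.Adj a y → y = h ∨ y = b
  Nb : ∀ y, G.Adj b y → y = a ∨ y = c
  Nc : ∀ y, G.Adj c y → y = b ∨ y = h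

lemma CQuad.symm {V : Type*} {G : SimpleGraph V} {h a b c : V} (H : CQuad G h a b c) :
    CQuad G h c b a :=
  ⟨H.ch.symm, H.bc.symm, H.ab.symm, H.ha.symm, H.nhb, H.nac.symm,
    fun y hy => (H.Nc y hy).symm, fun y hy => (H.Nb y hy).symm, fun y hy => (H.Na y hy).symm⟩

lemma CQuad.quad {V : Type*} {G : SimpleGraph V} {h a b c : V} (H : CQuad G h a b c) :
    Quad G h a b c := by
  have e1 := H.ha.ne; have e2 := H.ab.ne; have e3 := H.bc.ne; have e4 := H.ch.ne
  have e5 := H.nhb; have e6 := H.nac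
  refine ⟨H.ha, H.ab, H.bc, H.ch, H.nhb, H.nac, ?_, ?_, ?_⟩
  · intro h'
    have := H.Nb h h'.symm
    grind
  · intro h'
    have := H.Na c h'
    grind
  · intro x y z hx hy hz hxz hyz
    simp only [Set.mem_insert_iff, Set.mem_singleton_iff] at hx hy hz
    have f1 := H.Na z; have f2 := H.Nb z; have f3 := H.Nc z
    grind

lemma CQuad.dist {V : Type*} {G : SimpleGraph V} (hG : G.Connected) {h a b c : V}
    (H : CQuad G h a b c) (x : V) (xa : x ≠ a) (xb : x ≠ b) (xc : x ≠ c) :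
    G.dist x h < G.dist x a ∧ G.dist x a < G.dist x b := by
  obtain ⟨y1, h1, h1'⟩ := last_step hG xa
  obtain ⟨y2, h2, h2'⟩ := last_step hG xb
  obtain ⟨y3, h3, h3'⟩ := last_step hG xc
  have l1 := dist_lip hG H.ha x
  have l2 := dist_lip hG H.ch x
  rcases H.Na _ h1 with rfl | rfl <;> rcases H.Nb _ h2 with rfl | rfl <;>
    rcases H.Nc _ h3 with rfl | rfl <;> omega

lemma CQuad.edges {V : Type*} {G : SimpleGraph V} {h a b c : V}
    (H : CQuad G h a b c) {x y : V} (hxy : G.Adj x y) : s(x, y) = s(h, a) ∨ s(x, y) = s(a, b) ∨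
    s(x, y) = s(b, c) ∨ s(x, y) = s(c, h) ∨ (x ≠ a ∧ x ≠ b ∧ x ≠ c ∧ y ≠ a ∧ y ≠ b ∧ y ≠ c) := by
  simp only [Sym2.eq_iff]
  have e1 := H.Na x; have e2 := H.Na y; have e3 := H.Nb x; have e4 := H.Nb y
  have e5 := H.Nc x; have e6 := H.Nc y
  have := hxy.symm
  grind

lemma CQuad.val1 {V : Type*} {G : SimpleGraph V} [Fintype V] (hG : G.Connected) {h a b c : V}
    (hm : 15 < #G.edgeFinset) (H : CQuad G h a b c) :
    gg G h a ≤ 8 * (#G.edgeFinset : ℤ) - 16 := by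
  have hc : #({s(h, a), s(a, b), s(b, c)} : Finset (Sym2 V)) ≤ 3 := Finset.card_le_three
  have := gg_le G h a {s(h, a), s(a, b), s(b, c)} 2 (H.quad.equi hG) ?_ (by omega)
  · have hc' : (#({s(h, a), s(a, b), s(b, c)} : Finset (Sym2 V)) : ℤ) ≤ 3 := by exact_mod_cast hc
    have hm' : (15 : ℤ) < #G.edgeFinset := by exact_mod_cast hm
    push_cast at this
    nlinarith
  · intro f hf hf'
    induction f with | h x y
    rw [SimpleGraph.mem_edgeFinset] at hf
    have hxy : G.Adj x y := hf
    simp only [mem_insert, mem_singleton] at hf'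
    rcases H.edges hxy with h1 | h1 | h1 | h1 | ⟨x1, x2, x3, y1, y2, y3⟩
    · tauto
    · tauto
    · tauto
    · rw [h1, eDist_right]
      exact eDist_pos hG H.nac.symm H.ha.ne
    · have h1 := H.dist hG x x1 x2 x3
      have h2 := H.dist hG y y1 y2 y3
      rw [eDist_mk, eDist_mk]
      omega

lemma CQuad.val2 {V : Type*} {G : SimpleGraph V} [Fintype V] (hG : G.Connected) {h a b c : V}
    (hm : 15 < #G.edgeFinset) (H : CQuad G h a b c) :
    gg G a b ≤ 8 * (#G.edgeFinset : ℤ) - 16 := by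
  have hc : #({s(a, b), s(b, c), s(c, h)} : Finset (Sym2 V)) ≤ 3 := Finset.card_le_three
  have := gg_le G a b {s(a, b), s(b, c), s(c, h)} 2 (H.quad.rot.equi hG) ?_ (by omega)
  · have hc' : (#({s(a, b), s(b, c), s(c, h)} : Finset (Sym2 V)) : ℤ) ≤ 3 := by exact_mod_cast hc
    have hm' : (15 : ℤ) < #G.edgeFinset := by exact_mod_cast hm
    push_cast at this
    nlinarith
  · intro f hf hf'
    induction f with | h x y
    rw [SimpleGraph.mem_edgeFinset] at hf
    have hxy : G.Adj x y := hf
    simp only [mem_insert, mem_singleton] at hf'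
    rcases H.edges hxy with h1 | h1 | h1 | h1 | ⟨x1, x2, x3, y1, y2, y3⟩
    · rw [h1, eDist_right]
      exact eDist_pos hG H.nhb H.ab.ne
    · tauto
    · tauto
    · tauto
    · have h1 := H.dist hG x x1 x2 x3
      have h2 := H.dist hG y y1 y2 y3
      rw [eDist_mk, eDist_mk]
      omega

/-! ### Part 7: the general bundle and the isomorphism lemma -/

def bigG (k : ℕ) (len : Fin k → ℕ) (P : Type*) (q : ℕ) :
    SimpleGraph (Unit ⊕ ((Σ i : Fin k, Fin (len i - 1)) ⊕ (P ⊕ Fin q))) :=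
  SimpleGraph.fromRel fun x y =>
    match x, y with
    | Sum.inl _, Sum.inr (Sum.inr (Sum.inl _)) => True
    | Sum.inl _, Sum.inr (Sum.inr (Sum.inr b)) => b.val = 0
    | Sum.inr (Sum.inr (Sum.inr a)), Sum.inr (Sum.inr (Sum.inr b)) => a.val + 1 = b.val
    | Sum.inl _, Sum.inr (Sum.inl ⟨i, a⟩) => a.val = 0 ∨ a.val = len i - 2
    | Sum.inr (Sum.inl ⟨i, a⟩), Sum.inr (Sum.inl ⟨j, b⟩) => i = j ∧ a.val + 1 = b.val
    | _, _ => False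

def bigCongr (k : ℕ) (len : Fin k → ℕ) {P P' : Type*} (e : P ≃ P') (q : ℕ) :
    bigG k len P q ≃g bigG k len P' q where
  toEquiv := Equiv.sumCongr (Equiv.refl _) (Equiv.sumCongr (Equiv.refl _)
    (Equiv.sumCongr e (Equiv.refl _)))
  map_rel_iff' := by
    rintro (_ | ⟨i, a⟩ | x | b) (_ | ⟨j, a'⟩ | x' | b') <;> simp [bigG]

def bigBundle (k : ℕ) (len : Fin k → ℕ) (p : ℕ) :
    bigG k len (Fin p) 0 ≃g bundleGraph k len p where
  toEquiv := Equiv.sumCongr (Equiv.refl _) (Equiv.sumCongr (Equiv.refl _) (Equiv.sumEmpty _ _))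
  map_rel_iff' := by
    rintro (_ | ⟨i, a⟩ | x | b) (_ | ⟨j, a'⟩ | x' | b') <;>
      first | exact b.elim0 | exact b'.elim0 | simp [bigG, bundleGraph]

def bigStar (n k : ℕ) :
    bigG k (fun _ => 4) (Fin (n - 3 * k - 3)) 2 ≃g GStar1 n k where
  toEquiv := Equiv.refl _
  map_rel_iff' := by
    rintro (_ | ⟨i, a⟩ | x | b) (_ | ⟨j, a'⟩ | x' | b') <;> simp [bigG, GStar1] <;> omega

lemma deg_cyc {V : Type*} {G : SimpleGraph V} {a x h : V} {p : G.Walk a a} (hp : p.IsCycle)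
    (hx : x ∈ p.support) (hN : ∀ y, G.Adj x y → y = h) : False := by
  have hq : (p.rotate x hx).IsCycle := by simpa using hp
  generalize p.rotate x hx = q at hq
  have h3 := hq.three_le_length
  have h1 : G.Adj (q.getVert 0) (q.getVert 1) := q.adj_getVert_succ (by omega)
  have h2 : G.Adj (q.getVert (q.length - 1)) (q.getVert (q.length - 1 + 1)) :=
    q.adj_getVert_succ (by omega)
  rw [show q.length - 1 + 1 = q.length by omega, q.getVert_length] at h2
  rw [q.getVert_zero] at h1
  have := cyc_inj hq (i := 1) (j := q.length - 1) (by omega) (by omega)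
    ((hN _ h1).trans (hN _ h2.symm).symm)
  omega

lemma iso_of_hub {V : Type*} {G : SimpleGraph V} (hG : G.Connected) (hQ : CycDisj G)
    (hnt : Nontrivial V) (h : V)
    (k : ℕ) (len : Fin k → ℕ) (W : Fin k → G.Walk h h) (hcyc : ∀ i, (W i).IsCycle)
    (hlen : ∀ i, (W i).length = len i)
    (hconc : ∀ i, ∀ x ∈ (W i).support, x ≠ h → ∀ y, G.Adj x y → s(x, y) ∈ (W i).edges)
    (hinj : ∀ i j, (W i).edges.toFinset = (W j).edges.toFinset → i = j)
    (P : Set V) (hP : ∀ x ∈ P, G.Adj h x ∧ ∀ y, G.Adj x y → y = h)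
    (q : ℕ) (w : Fin q → V) (hwinj : Function.Injective w) (hwh : ∀ j, w j ≠ h)
    (hwc : ∀ j i, w j ∉ (W i).support) (hwP : ∀ j, w j ∉ P)
    (hw0 : ∀ j, j.val = 0 → G.Adj h (w j)) (hw1 : ∀ i j, i.val + 1 = j.val → G.Adj (w i) (w j))
    (hE : ∀ x y, G.Adj x y → (∃ i, s(x, y) ∈ (W i).edges) ∨ (∃ z ∈ P, s(x, y) = s(h, z)) ∨
      (∃ j, j.val = 0 ∧ s(x, y) = s(h, w j)) ∨ ∃ i j, i.val + 1 = j.val ∧ s(x, y) = s(w i, w j)) :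
    Nonempty (bigG k len P q ≃g G) := by
  have hl3 : ∀ i, 3 ≤ len i := fun i => hlen i ▸ (hcyc i).three_le_length
  have hne : ∀ i (a : Fin (len i - 1)), (W i).getVert (a.val + 1) ≠ h := by
    intro i a
    exact cyc_ne_start (hcyc i) (by omega) (by have := hlen i; omega)
  let ψ : Unit ⊕ ((Σ i : Fin k, Fin (len i - 1)) ⊕ (P ⊕ Fin q)) → V :=
    Sum.elim (fun _ => h) (Sum.elim (fun x => (W x.1).getVert (x.2.val + 1))
      (Sum.elim (fun x => x.1) w))
  have hψ : Function.Injective ψ := by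
    refine Function.Injective.sumElim (fun _ _ _ => rfl) (Function.Injective.sumElim ?_
      (Function.Injective.sumElim Subtype.val_injective hwinj ?_) ?_) ?_
    · rintro ⟨i, a⟩ ⟨j, b⟩ hab
      simp only at hab
      have hij : i = j := by
        apply hinj
        have had : G.Adj ((W i).getVert (a.val + 1)) ((W i).getVert (a.val + 1 + 1)) :=
          (W i).adj_getVert_succ (by have := hlen i; omega)
        have h1 := hconc i _ ((W i).getVert_mem_support _) (hne i a) _ had
        have h2 := hconc j ((W i).getVert (a.val + 1))
          (by rw [hab]; exact (W j).getVert_mem_support _) (hne i a) _ had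
        exact hQ ⟨_, _, hcyc i, rfl⟩ ⟨_, _, hcyc j, rfl⟩ _ (List.mem_toFinset.2 h1)
          (List.mem_toFinset.2 h2)
      subst hij
      have := cyc_inj (hcyc i) (by have := hlen i; omega) (by have := hlen i; omega) hab
      have hab' : a = b := Fin.ext (by omega)
      rw [hab']
    · rintro ⟨x, hx⟩ j hxj
      exact hwP j (hxj ▸ hx)
    · rintro ⟨i, a⟩ (⟨x, hx⟩ | j) hxj
      · simp only [Sum.elim_inl] at hxj
        exact deg_cyc (hcyc i) (hxj ▸ (W i).getVert_mem_support _) (hP x hx).2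
      · simp only [Sum.elim_inr] at hxj
        exact hwc j i (hxj ▸ (W i).getVert_mem_support _)
    · rintro _ (⟨i, a⟩ | ⟨x, hx⟩ | j) hxj
      · exact hne i a hxj.symm
      · exact (hP x hx).1.ne hxj
      · exact hwh j hxj.symm
  have hedge : ∀ x y, G.Adj x y → ∃ a b, s(x, y) = s(ψ a, ψ b) ∧ (bigG k len P q).Adj a b := by
    intro x y hxy
    rcases hE x y hxy with ⟨i, hi⟩ | ⟨z, hz, hs⟩ | ⟨j, hj, hs⟩ | ⟨i, j, hij, hs⟩
    · rw [(W i).mk_mem_edges_iff_exists] at hi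
      obtain ⟨t, ht, hs⟩ := hi
      have hl := hlen i
      have h3 := hl3 i
      rcases Nat.eq_zero_or_pos t with h0 | h0
      · subst h0
        refine ⟨Sum.inl (), Sum.inr (Sum.inl ⟨i, ⟨0, by omega⟩⟩), ?_, by simp [bigG]⟩
        rw [← hs]
        simp [ψ]
      · rcases Nat.lt_or_ge (t + 1) (len i) with h1 | h1
        · refine ⟨Sum.inr (Sum.inl ⟨i, ⟨t - 1, by omega⟩⟩), Sum.inr (Sum.inl ⟨i, ⟨t, by omega⟩⟩), ?_, ?_⟩
          · rw [← hs]
            simp only [ψ, Sum.elim_inr, Sum.elim_inl]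
            rw [show t - 1 + 1 = t by omega]
          · simp [bigG]
            omega
        · refine ⟨Sum.inr (Sum.inl ⟨i, ⟨t - 1, by omega⟩⟩), Sum.inl (), ?_, ?_⟩
          · rw [← hs]
            simp only [ψ, Sum.elim_inr, Sum.elim_inl]
            rw [show t - 1 + 1 = t by omega, show t + 1 = (W i).length by omega,
              (W i).getVert_length]
          · simp [bigG]
            omega
    · exact ⟨Sum.inl (), Sum.inr (Sum.inr (Sum.inl ⟨z, hz⟩)), hs, by simp [bigG]⟩
    · exact ⟨Sum.inl (), Sum.inr (Sum.inr (Sum.inr j)), hs, by simp [bigG, hj]⟩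
    · refine ⟨Sum.inr (Sum.inr (Sum.inr i)), Sum.inr (Sum.inr (Sum.inr j)), hs, ?_⟩
      simp only [bigG, SimpleGraph.fromRel_adj]
      refine ⟨?_, Or.inl hij⟩
      simp only [ne_eq, Sum.inr.injEq]
      rintro rfl
      omega
  have hsurj : Function.Surjective ψ := by
    intro x
    obtain ⟨y, hy⟩ := hG.preconnected.exists_adj_of_nontrivial x
    obtain ⟨a, b, hs, -⟩ := hedge x y hy
    rw [Sym2.eq_iff] at hs
    rcases hs with ⟨h1, -⟩ | ⟨h1, -⟩
    · exact ⟨a, h1.symm⟩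
    · exact ⟨b, h1.symm⟩
  have hfw : ∀ a b, (bigG k len P q).Adj a b → G.Adj (ψ a) (ψ b) := by
    have hcase : ∀ i (a : Fin (len i - 1)), (a.val = 0 ∨ a.val = len i - 2) →
        G.Adj h ((W i).getVert (a.val + 1)) := by
      intro i a ha
      have hl := hlen i
      have h3 := hl3 i
      rcases ha with ha | ha
      · have := (W i).adj_getVert_succ (i := 0) (by omega)
        rw [(W i).getVert_zero] at this
        rw [ha]; exact this
      · have := (W i).adj_getVert_succ (i := (W i).length - 1) (by omega)
        rw [show (W i).length - 1 + 1 = (W i).length by omega, (W i).getVert_length] at this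
        rw [ha, show len i - 2 + 1 = (W i).length - 1 by omega]
        exact this.symm
    rintro (_ | ⟨i, a⟩ | x | b) (_ | ⟨j, a'⟩ | x' | b') hab <;>
      simp only [bigG, SimpleGraph.fromRel_adj, ne_eq, or_false, false_or, and_false, or_self] at hab
    · exact hcase j a' hab.2
    · exact (hP _ x'.2).1
    · exact hw0 b' hab.2
    · exact (hcase i a hab.2).symm
    · obtain ⟨-, ⟨rfl, h2⟩ | ⟨rfl, h2⟩⟩ := hab
      · have := (W i).adj_getVert_succ (i := a.val + 1) (by have := hlen i; omega)
        rw [h2] at this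
        simpa [ψ, h2] using this
      · have := (W j).adj_getVert_succ (i := a'.val + 1) (by have := hlen j; omega)
        rw [h2] at this
        simpa [ψ, h2] using this.symm
    · exact (hP _ x.2).1.symm
    · exact (hw0 b hab.2).symm
    · rcases hab.2 with h2 | h2
      · exact hw1 _ _ h2
      · exact (hw1 _ _ h2).symm
  refine ⟨⟨Equiv.ofBijective ψ ⟨hψ, hsurj⟩, ?_⟩⟩
  intro a b
  change G.Adj (ψ a) (ψ b) ↔ _
  refine ⟨fun hab => ?_, hfw a b⟩
  obtain ⟨a', b', hs, hab'⟩ := hedge _ _ hab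
  rw [Sym2.eq_iff] at hs
  rcases hs with ⟨h1, h2⟩ | ⟨h1, h2⟩
  · rw [hψ h1, hψ h2]; exact hab'
  · rw [hψ h1, hψ h2]; exact hab'.symm

/-! ### Part 8: structure theorems -/

lemma pend_brd {V : Type*} [Fintype V] {G : SimpleGraph V} {v w : V} (h : G.Adj v w)
    (hN : ∀ y, G.Adj w y → y = v) : s(v, w) ∈ Brd G := by
  unfold Brd
  rw [mem_filter, SimpleGraph.mem_edgeFinset]
  refine ⟨h, ?_⟩
  intro C hC he
  rw [mem_cycs] at hC
  obtain ⟨a, p, hp, rfl⟩ := hC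
  rw [List.mem_toFinset] at he
  exact deg_cyc hp (p.snd_mem_support_of_mem_edges he) hN

lemma edge_cases {V : Type*} [Fintype V] {G : SimpleGraph V} {x y : V} (h : G.Adj x y) :
    s(x, y) ∈ Brd G ∨ ∃ C ∈ cycs G, s(x, y) ∈ C := by
  by_cases hc : ∃ C ∈ cycs G, s(x, y) ∈ C
  · right; exact hc
  · left
    push Not at hc
    unfold Brd
    rw [mem_filter, SimpleGraph.mem_edgeFinset]
    exact ⟨h, hc⟩

lemma brd_not {V : Type*} [Fintype V] {G : SimpleGraph V} {e : Sym2 V} (h : e ∈ Brd G)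
    {C : Finset (Sym2 V)} (hC : C ∈ cycs G) : e ∉ C := (mem_filter.1 h).2 C hC

lemma hub_lemma {V : Type*} [Fintype V] {G : SimpleGraph V} (hG : G.Connected) (hQ : CycDisj G)
    {h v : V} (hv : s(h, v) ∈ Brd G) (X : Set V) (hX : v ∈ X)
    (hXcl : ∀ x ∈ X, ∀ y, G.Adj x y → y ∈ X ∨ y = h)
    (hXB : ∀ x ∈ X, ∀ y, G.Adj x y → s(x, y) ∈ Brd G)
    (hBr : ∀ e ∈ Brd G, e ≠ s(h, v) → Pend G e)
    (hC : ∀ C ∈ cycs G, ∃ h', ConcCyc G C h') :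
    (∀ C ∈ cycs G, ConcCyc G C h) ∧ ∀ e ∈ Brd G,
      (∃ x, e = s(h, x) ∧ ∀ y, G.Adj x y → y = h) ∨ (∃ x ∈ X, ∃ y, e = s(x, y)) := by
  have hhv : G.Adj h v := (brd_isBridge hv).1
  have key : ∀ x, x = h ∨ x ∈ X ∨ (s(h, x) ∈ Brd G ∧ ∀ y, G.Adj x y → y = h) ∨
      ∃ p : G.Walk h h, p.IsCycle ∧ (∀ x ∈ p.support, x ≠ h → ∀ y, G.Adj x y → s(x, y) ∈ p.edges) ∧
        x ∈ p.support := by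
    intro x
    have hr := hG.preconnected h x
    rw [SimpleGraph.reachable_iff_reflTransGen] at hr
    induction hr with
    | refl => left; rfl
    | tail hab hbc ih =>
      rename_i b c
      by_cases hch : c = h
      · left; exact hch
      rcases ih with rfl | hbX | ⟨hb1, hb2⟩ | ⟨p, hp, hconc, hbp⟩
      · by_cases hcv : c = v
        · subst hcv; right; left; exact hX
        rcases edge_cases hbc with he | ⟨C, hCc, he⟩
        · have hne : s(b, c) ≠ s(b, v) := by
            intro h'
            exact hcv (Sym2.congr_right.1 h')
          obtain ⟨s, t, hst, hN⟩ := hBr _ he hne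
          rw [Sym2.eq_iff] at hst
          rcases hst with ⟨rfl, rfl⟩ | ⟨rfl, rfl⟩
          · right; right; left; exact ⟨he, hN⟩
          · exact absurd (hN _ hhv).symm hcv
        · obtain ⟨h', p, hp, hpC, hconc⟩ := hC C hCc
          have he' : s(b, c) ∈ p.edges := by rw [← List.mem_toFinset, hpC]; exact he
          have hb : b ∈ p.support := p.fst_mem_support_of_mem_edges he'
          have hbh : b = h' := by
            by_contra hne
            have h2 := hconc b hb hne v hhv
            rw [← List.mem_toFinset, hpC] at h2
            exact brd_not hv hCc h2
          subst hbh
          right; right; right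
          exact ⟨p, hp, hconc, p.snd_mem_support_of_mem_edges he'⟩
      · rcases hXcl b hbX c hbc with h1 | h1
        · right; left; exact h1
        · left; exact h1
      · left; exact hb2 c hbc
      · by_cases hbh : b = h
        · subst hbh
          -- same as the first case
          by_cases hcv : c = v
          · subst hcv; right; left; exact hX
          rcases edge_cases hbc with he | ⟨C, hCc, he⟩
          · have hne : s(b, c) ≠ s(b, v) := by
              intro h'
              exact hcv (Sym2.congr_right.1 h')
            obtain ⟨s, t, hst, hN⟩ := hBr _ he hne
            rw [Sym2.eq_iff] at hst
            rcases hst with ⟨rfl, rfl⟩ | ⟨rfl, rfl⟩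
            · right; right; left; exact ⟨he, hN⟩
            · exact absurd (hN _ hhv).symm hcv
          · obtain ⟨h', p, hp, hpC, hconc⟩ := hC C hCc
            have he' : s(b, c) ∈ p.edges := by rw [← List.mem_toFinset, hpC]; exact he
            have hb : b ∈ p.support := p.fst_mem_support_of_mem_edges he'
            have hbh : b = h' := by
              by_contra hne
              have h2 := hconc b hb hne v hhv
              rw [← List.mem_toFinset, hpC] at h2
              exact brd_not hv hCc h2
            subst hbh
            right; right; right
            exact ⟨p, hp, hconc, p.snd_mem_support_of_mem_edges he'⟩
        · right; right; right
          exact ⟨p, hp, hconc, p.snd_mem_support_of_mem_edges (hconc b hbp hbh c hbc)⟩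
  constructor
  · intro C hCc
    have hCc' := (mem_cycs _ _).1 hCc
    obtain ⟨e, he⟩ := isCyc_nonempty hCc'
    have main : ∀ x y, x ≠ h → s(x, y) ∈ C → ConcCyc G C h := by
      intro x y hx hxy
      have hadj : G.Adj x y := isCyc_sub hCc' _ hxy
      rcases key x with h1 | h1 | ⟨h1, h2⟩ | ⟨p, hp, hconc, hxp⟩
      · exact absurd h1 hx
      · exact absurd hxy (brd_not (hXB x h1 y hadj) hCc)
      · rw [h2 y hadj, Sym2.eq_swap] at hxy
        exact absurd hxy (brd_not h1 hCc)
      · have h3 := hconc x hxp hx y hadj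
        have : p.edges.toFinset = C :=
          hQ ⟨_, p, hp, rfl⟩ hCc' _ (List.mem_toFinset.2 h3) hxy
        exact ⟨p, hp, this, hconc⟩
    induction e with | h x y
    by_cases hx : x = h
    · have hadj : G.Adj x y := isCyc_sub hCc' _ he
      refine main y x ?_ (by rw [Sym2.eq_swap]; exact he)
      rintro rfl
      exact hadj.ne hx
    · exact main x y hx he
  · intro e he
    have main : ∀ x y, x ≠ h → s(x, y) ∈ Brd G →
      (∃ z, s(x, y) = s(h, z) ∧ ∀ y, G.Adj z y → y = h) ∨ (∃ z ∈ X, ∃ t, s(x, y) = s(z, t)) := by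
      intro x y hx hxy
      have hadj : G.Adj x y := (brd_isBridge hxy).1
      rcases key x with h1 | h1 | ⟨h1, h2⟩ | ⟨p, hp, hconc, hxp⟩
      · exact absurd h1 hx
      · right; exact ⟨x, h1, y, rfl⟩
      · left
        refine ⟨x, ?_, h2⟩
        rw [h2 y hadj, Sym2.eq_swap]
      · have h3 := hconc x hxp hx y hadj
        exact absurd (List.mem_toFinset.2 h3) (brd_not hxy ((mem_cycs _ _).2 ⟨_, p, hp, rfl⟩))
    induction e with | h x y
    by_cases hx : x = h
    · have hadj : G.Adj x y := (brd_isBridge he).1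
      rw [Sym2.eq_swap]
      refine main y x ?_ (by rw [Sym2.eq_swap]; exact he)
      rintro rfl
      exact hadj.ne hx
    · exact main x y hx he

lemma iso_final {V : Type*} [Fintype V] {G : SimpleGraph V} (hG : G.Connected) (hQ : CycDisj G)
    (hnt : Nontrivial V) (h : V) (k : ℕ) (e : Fin k ≃ {C // C ∈ cycs G})
    (hC : ∀ C ∈ cycs G, ConcCyc G C h)
    (q : ℕ) (w : Fin q → V) (hwinj : Function.Injective w) (hwh : ∀ j, w j ≠ h)
    (hwB : ∀ j y, G.Adj (w j) y → s(w j, y) ∈ Brd G)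
    (hwP : ∀ j, ∃ y, G.Adj (w j) y ∧ (y = h → ∃ z, z ≠ h ∧ G.Adj (w j) z))
    (hw0 : ∀ j, j.val = 0 → G.Adj h (w j)) (hw1 : ∀ i j, i.val + 1 = j.val → G.Adj (w i) (w j))
    (hBr : ∀ e ∈ Brd G, (∃ x, e = s(h, x) ∧ ∀ y, G.Adj x y → y = h) ∨
      (∃ j, j.val = 0 ∧ e = s(h, w j)) ∨ ∃ i j, i.val + 1 = j.val ∧ e = s(w i, w j)) :
    ∃ p, Fintype.card V = 1 + (∑ i, (#(e i).1 - 1) + (p + q)) ∧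
      Nonempty (G ≃g bigG k (fun i => #(e i).1) (Fin p) q) := by
  choose W hcyc hWC hconc using fun i => hC (e i).1 (e i).2
  have hiso := iso_of_hub hG hQ hnt h k (fun i => #(e i).1) W hcyc
    (fun i => by rw [← cyc_card (hcyc i), hWC]) hconc
    (fun i j hij => by
      rw [hWC, hWC] at hij
      exact e.injective (Subtype.ext hij))
    {x | G.Adj h x ∧ ∀ y, G.Adj x y → y = h} (fun x hx => hx) q w hwinj hwh
    (fun j i hji => by
      obtain ⟨y, hy, -⟩ := hwP j
      have h1 := hconc i _ hji (hwh j) y hy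
      rw [← List.mem_toFinset, hWC] at h1
      exact brd_not (hwB j y hy) (e i).2 h1)
    (fun j hj => by
      obtain ⟨y, hy, hy'⟩ := hwP j
      obtain ⟨z, hz, hz'⟩ := hy' (hj.2 y hy)
      exact hz (hj.2 z hz'))
    hw0 hw1 (by
      intro x y hxy
      rcases edge_cases hxy with hb | ⟨C, hCc, he⟩
      · right
        rcases hBr _ hb with ⟨z, hz, hz'⟩ | h1
        · left
          refine ⟨z, ⟨?_, hz'⟩, hz⟩
          have : G.Adj x y ↔ G.Adj h z := by
            rw [← SimpleGraph.mem_edgeSet, hz, SimpleGraph.mem_edgeSet]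
          exact this.1 hxy
        · right; exact h1
      · left
        refine ⟨e.symm ⟨C, hCc⟩, ?_⟩
        rw [← List.mem_toFinset, hWC, Equiv.apply_symm_apply]
        exact he)
  obtain ⟨φ⟩ := hiso
  set P : Set V := {x | G.Adj h x ∧ ∀ y, G.Adj x y → y = h} with hPd
  refine ⟨Fintype.card P, ?_, ⟨φ.symm.trans (bigCongr k _ (Fintype.equivFin P) q)⟩⟩
  rw [← Fintype.card_congr φ.toEquiv]
  simp only [Fintype.card_sum, Fintype.card_unit, Fintype.card_sigma, Fintype.card_fin]

lemma brd_nonempty {V : Type*} [Fintype V] {G : SimpleGraph V} (k : ℕ) (hk : #(cycs G) = k)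
    (h4 : ∀ C ∈ cycs G, #C ≤ 4) (hm : 4 * k < #G.edgeFinset) : ∃ e, e ∈ Brd G := by
  by_contra! hc
  have hsub : G.edgeFinset ⊆ (cycs G).biUnion id := by
    intro e he
    induction e with | h x y
    rw [SimpleGraph.mem_edgeFinset] at he
    rcases edge_cases (G := G) (x := x) (y := y) he with h1 | ⟨C, hC, h1⟩
    · exact absurd h1 (hc _)
    · exact mem_biUnion.2 ⟨C, hC, h1⟩
  have h1 := Finset.card_le_card hsub
  have h2 := Finset.card_biUnion_le (s := cycs G) (t := id)
  have h3 := Finset.sum_le_card_nsmul (cycs G) (fun C => #(id C)) 4 h4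
  rw [hk, smul_eq_mul] at h3
  omega

/-- all bridges pendant, all cycles concentrated: hub form -/
lemma struct_pend {V : Type*} [Fintype V] {G : SimpleGraph V} (hG : G.Connected) (hQ : CycDisj G)
    (k : ℕ) (hk : #(cycs G) = k) (e : Fin k ≃ {C // C ∈ cycs G})
    (h4 : ∀ C ∈ cycs G, #C ≤ 4) (hm : 4 * k < #G.edgeFinset)
    (hB : ∀ e ∈ Brd G, Pend G e) (hC : ∀ C ∈ cycs G, ∃ h, ConcCyc G C h) :
    ∃ p, Fintype.card V = 1 + (∑ i, (#(e i).1 - 1) + (p + 0)) ∧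
      Nonempty (G ≃g bigG k (fun i => #(e i).1) (Fin p) 0) := by
  obtain ⟨e₁, he₁⟩ := brd_nonempty k hk h4 hm
  obtain ⟨h, v, rfl, hN⟩ := hB e₁ he₁
  have hadj : G.Adj h v := (brd_isBridge he₁).1
  have H := hub_lemma hG hQ he₁ {v} rfl
    (by rintro x rfl y hy; right; exact hN y hy)
    (by rintro x rfl y hy; rw [hN y hy, Sym2.eq_swap]; exact he₁)
    (fun e he _ => hB e he) hC
  refine iso_final hG hQ ⟨h, v, hadj.ne⟩ h k e H.1 0 Fin.elim0 (fun i => i.elim0)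
    (fun i => i.elim0) (fun i => i.elim0) (fun i => i.elim0) (fun i => i.elim0) (fun i => i.elim0) ?_
  intro e he
  left
  rcases H.2 e he with h1 | ⟨x, rfl, y, rfl⟩
  · exact h1
  · have hxy : G.Adj x y := (brd_isBridge he).1
    refine ⟨x, ?_, hN⟩
    rw [hN y hxy, Sym2.eq_swap]

lemma bigLen {k : ℕ} {len len' : Fin k → ℕ} (h : len = len') (P : Type*) (q : ℕ) :
    Nonempty (bigG k len P q ≃g bigG k len' P q) := by
  subst h
  exact ⟨SimpleGraph.Iso.refl⟩

lemma struct_good {V : Type*} [Fintype V] {G : SimpleGraph V} (hG : G.Connected) (hQ : CycDisj G)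
    (n k : ℕ) (hn : Fintype.card V = n) (hk : #(cycs G) = k)
    (hm : 4 * k < #G.edgeFinset)
    (hB : ∀ e ∈ Brd G, Pend G e) (hC : ∀ C ∈ cycs G, ConcN G 4 C) :
    Nonempty (G ≃g bundleGraph k (fun _ => 4) (n - 3 * k - 1)) := by
  have e : Fin k ≃ {C // C ∈ cycs G} := (Finset.equivFinOfCardEq hk).symm
  obtain ⟨p, hp, ⟨φ⟩⟩ := struct_pend hG hQ k hk e (fun C h => (hC C h).1.le) hm hB
    (fun C h => (hC C h).2)
  have hlen : (fun i => #(e i).1) = fun _ => 4 := funext fun i => (hC _ (e i).2).1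
  have hs : ∑ i, (#(e i).1 - 1) = k * 3 := by
    rw [Finset.sum_congr rfl fun i _ => by rw [(hC _ (e i).2).1]]
    simp
  obtain ⟨ψ⟩ := bigLen hlen (Fin p) 0
  have : n - 3 * k - 1 = p := by omega
  rw [this]
  exact ⟨(φ.trans ψ).trans (bigBundle k _ p)⟩

lemma struct_B {V : Type*} [Fintype V] {G : SimpleGraph V} (hG : G.Connected) (hQ : CycDisj G)
    (n k : ℕ) (hn : Fintype.card V = n) (hk : #(cycs G) = k)
    (hm : 4 * k < #G.edgeFinset) (C₀ : Finset (Sym2 V)) (hC₀ : C₀ ∈ cycs G) (h3 : ConcN G 3 C₀)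
    (hB : ∀ e ∈ Brd G, Pend G e) (hC : ∀ C ∈ cycs G, C ≠ C₀ → ConcN G 4 C) :
    Nonempty (G ≃g bundleGraph k (fun i => if (i : ℕ) = 0 then 3 else 4)
          (n + k - 1 - (4 * k - 1))) := by
  have hk0 : 0 < k := by rw [← hk]; exact Finset.card_pos.2 ⟨C₀, hC₀⟩
  obtain ⟨k, rfl⟩ : ∃ k', k = k' + 1 := ⟨k - 1, by omega⟩
  have e' : Fin (k + 1) ≃ {C // C ∈ cycs G} := (Finset.equivFinOfCardEq hk).symm
  obtain ⟨e, he⟩ : ∃ e : Fin (k + 1) ≃ {C // C ∈ cycs G}, e 0 = ⟨C₀, hC₀⟩ :=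
    ⟨(Equiv.swap 0 (e'.symm ⟨C₀, hC₀⟩)).trans e', by simp⟩
  have hall : ∀ C ∈ cycs G, #C ≤ 4 ∧ ∃ h, ConcCyc G C h := by
    intro C h
    by_cases hne : C = C₀
    · rw [hne]; exact ⟨by have := h3.1; omega, h3.2⟩
    · exact ⟨(hC C h hne).1.le, (hC C h hne).2⟩
  obtain ⟨p, hp, ⟨φ⟩⟩ := struct_pend hG hQ (k + 1) hk e (fun C h => (hall C h).1) hm hB
    (fun C h => (hall C h).2)
  have hlen' : ∀ i, #(e i).1 = if (i : ℕ) = 0 then 3 else 4 := by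
    intro i
    split_ifs with hi
    · have : i = 0 := Fin.ext hi
      rw [this, he]; exact h3.1
    · refine (hC _ (e i).2 ?_).1
      intro h
      have : e i = e 0 := by rw [he]; exact Subtype.ext h
      apply hi
      rw [e.injective this]; rfl
  have hlen : (fun i => #(e i).1) = fun i : Fin (k + 1) => if (i : ℕ) = 0 then 3 else 4 :=
    funext hlen'
  have hs : ∑ i, (#(e i).1 - 1) = 2 + k * 3 := by
    rw [Finset.sum_congr rfl fun i _ => by rw [hlen' i]]
    rw [Fin.sum_univ_succ]
    simp
  obtain ⟨ψ⟩ := bigLen hlen (Fin p) 0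
  have : n + (k + 1) - 1 - (4 * (k + 1) - 1) = p := by omega
  rw [this]
  exact ⟨(φ.trans ψ).trans (bigBundle (k + 1) _ p)⟩

lemma struct_A {V : Type*} [Fintype V] {G : SimpleGraph V} (hG : G.Connected) (hQ : CycDisj G)
    (n k : ℕ) (hn : Fintype.card V = n) (hk : #(cycs G) = k)
    (e₀ : Sym2 V) (he₀ : e₀ ∈ Brd G) (hI : Inner2 G e₀)
    (hB : ∀ e ∈ Brd G, e ≠ e₀ → Pend G e) (hC : ∀ C ∈ cycs G, ConcN G 4 C) :
    Nonempty (G ≃g GStar1 n k) := by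
  have e : Fin k ≃ {C // C ∈ cycs G} := (Finset.equivFinOfCardEq hk).symm
  obtain ⟨u, v, w, rfl, hwu, hvw, hNv, hNw⟩ := hI
  have huv : G.Adj u v := (brd_isBridge he₀).1
  have hb2 : s(v, w) ∈ Brd G := pend_brd hvw hNw
  have hXB : ∀ x ∈ ({v, w} : Set V), ∀ y, G.Adj x y → s(x, y) ∈ Brd G := by
    rintro x (rfl | rfl) y hy
    · rcases hNv y hy with rfl | rfl
      · rw [Sym2.eq_swap]; exact he₀
      · exact hb2
    · rw [hNw y hy, Sym2.eq_swap]; exact hb2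
  have H := hub_lemma hG hQ he₀ {v, w} (by simp)
    (by
      rintro x (rfl | rfl) y hy
      · rcases hNv y hy with rfl | rfl
        · right; rfl
        · left; simp
      · left; rw [hNw y hy]; simp)
    hXB hB (fun C h => (hC C h).2)
  obtain ⟨p, hp, ⟨φ⟩⟩ := iso_final hG hQ ⟨u, v, huv.ne⟩ u k e H.1 2 ![v, w]
    (by
      intro i j hij
      have := hvw.ne
      fin_cases i <;> fin_cases j <;> simp_all)
    (by intro j; fin_cases j; exacts [huv.ne', hwu])
    (by intro j; fin_cases j; exacts [hXB v (by simp), hXB w (by simp)])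
    (by
      intro j; fin_cases j
      · exact ⟨w, hvw, fun h => absurd h hwu⟩
      · exact ⟨v, hvw.symm, fun h => absurd h huv.ne'⟩)
    (by
      intro j hj
      have : j = 0 := Fin.ext hj
      subst this; exact huv)
    (by
      intro i j hij
      have h0 : i = 0 := Fin.ext (by simp; omega)
      have h1 : j = 1 := Fin.ext (by simp; omega)
      subst h0; subst h1
      exact hvw)
    (by
      intro e he
      rcases H.2 e he with h1 | ⟨x, rfl | rfl, y, rfl⟩
      · left; exact h1
      · have hxy : G.Adj x y := (brd_isBridge he).1
        rcases hNv y hxy with rfl | rfl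
        · right; left
          exact ⟨0, rfl, Sym2.eq_swap⟩
        · right; right
          exact ⟨0, 1, rfl, rfl⟩
      · have hxy : G.Adj x y := (brd_isBridge he).1
        right; right
        refine ⟨0, 1, rfl, ?_⟩
        rw [hNw y hxy, Sym2.eq_swap]; rfl)
  have hlen : (fun i => #(e i).1) = fun _ => 4 := funext fun i => (hC _ (e i).2).1
  have hs : ∑ i, (#(e i).1 - 1) = k * 3 := by
    rw [Finset.sum_congr rfl fun i _ => by rw [(hC _ (e i).2).1]]
    simp
  have : p = n - 3 * k - 3 := by omega
  subst this
  obtain ⟨ψ⟩ := bigLen hlen (Fin (n - 3 * k - 3)) 2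
  exact ⟨(φ.trans ψ).trans (bigStar n k)⟩

/-! ### Part 9: upper bounds for the extremal graphs -/

noncomputable def fe {V : Type*} [Fintype V] (G : SimpleGraph V) (e : Sym2 V) : ℤ := max (ge G e) 0

lemma fe_nonneg {V : Type*} [Fintype V] (G : SimpleGraph V) (e : Sym2 V) : 0 ≤ fe G e :=
  le_max_right _ _

lemma fe_le {V : Type*} [Fintype V] (G : SimpleGraph V) (x y : V) {B : ℤ} (h : gg G x y ≤ B)
    (hB : 0 ≤ B) : fe G s(x, y) ≤ B := max_le h hB

lemma fe_insert {V : Type*} [Fintype V] (G : SimpleGraph V) (e : Sym2 V) (s : Finset (Sym2 V)) :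
    ∑ x ∈ insert e s, fe G x ≤ fe G e + ∑ x ∈ s, fe G x := by
  by_cases h : e ∈ s
  · rw [Finset.insert_eq_of_mem h]
    linarith [fe_nonneg G e]
  · rw [Finset.sum_insert h]

lemma fe_union {V : Type*} [Fintype V] (G : SimpleGraph V) (s t : Finset (Sym2 V)) :
    ∑ x ∈ s ∪ t, fe G x ≤ ∑ x ∈ s, fe G x + ∑ x ∈ t, fe G x := by
  have := Finset.sum_union_inter (s₁ := s) (s₂ := t) (f := fe G)
  have h2 : 0 ≤ ∑ x ∈ s ∩ t, fe G x := Finset.sum_nonneg fun _ _ => fe_nonneg G _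
  linarith

lemma fe_biUnion {V ι : Type*} [Fintype V] (G : SimpleGraph V) (s : Finset ι)
    (F : ι → Finset (Sym2 V)) :
    ∑ x ∈ s.biUnion F, fe G x ≤ ∑ i ∈ s, ∑ x ∈ F i, fe G x := by
  induction s using Finset.induction_on with
  | empty => simp
  | insert a s ha ih =>
    rw [Finset.biUnion_insert, Finset.sum_insert ha]
    exact (fe_union G _ _).trans (by linarith)

lemma cover_sum {V : Type*} [Fintype V] (G : SimpleGraph V) {k p : ℕ}
    (F : Fin k → Finset (Sym2 V)) (P : Fin p → Sym2 V) (Q : Finset (Sym2 V))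
    (hE : ∀ x y, G.Adj x y → (∃ i, s(x, y) ∈ F i) ∨ (∃ j, s(x, y) = P j) ∨ s(x, y) ∈ Q)
    (B b : ℤ) (hB : ∑ i, ∑ e ∈ F i, fe G e ≤ B) (c : ℤ) (hP : ∀ j, fe G (P j) ≤ c)
    (hQ : ∑ e ∈ Q, fe G e ≤ b) :
    ∑ e ∈ G.edgeFinset, ge G e ≤ B + p * c + b := by
  have hsub : G.edgeFinset ⊆ (univ.biUnion F ∪ univ.biUnion fun j => {P j}) ∪ Q := by
    intro e he
    induction e with | h x y
    rw [SimpleGraph.mem_edgeFinset, SimpleGraph.mem_edgeSet] at he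
    simp only [mem_union, mem_biUnion, mem_univ, true_and, mem_singleton]
    rcases hE x y he with h | h | h
    · exact Or.inl (Or.inl h)
    · exact Or.inl (Or.inr h)
    · exact Or.inr h
  have h1 : ∑ e ∈ G.edgeFinset, ge G e ≤ ∑ e ∈ G.edgeFinset, fe G e :=
    Finset.sum_le_sum fun _ _ => le_max_left _ _
  have h2 := Finset.sum_le_sum_of_subset_of_nonneg hsub (f := fe G) fun e _ _ => fe_nonneg G e
  have h3 := fe_union G (univ.biUnion F ∪ univ.biUnion fun j => {P j}) Q
  have h4 := fe_union G (univ.biUnion F) (univ.biUnion fun j => {P j})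
  have h5 := fe_biUnion G univ F
  have h6 := fe_biUnion G univ fun j => {P j}
  simp only [sum_singleton] at h6
  have h7 : ∑ j, fe G (P j) ≤ p * c := by
    have := Finset.sum_le_card_nsmul univ (fun j => fe G (P j)) c (fun j _ => hP j)
    simpa using this
  linarith

section
variable {V : Type*} [Fintype V] {G : SimpleGraph V} {k : ℕ} {len : Fin k → ℕ} {p q : ℕ}

lemma big_cyc4 (hG : G.Connected) (hm : 15 < #G.edgeFinset)
    (φ : bigG k len (Fin p) q ≃g G) (i : Fin k) (hi : len i = 4) :
    ∃ F : Finset (Sym2 V), ∑ e ∈ F, fe G e ≤ 4 * (8 * (#G.edgeFinset : ℤ) - 16) ∧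
      ∀ x y, (bigG k len (Fin p) q).Adj (Sum.inr (Sum.inl ⟨i, x⟩)) y →
        s(φ (Sum.inr (Sum.inl ⟨i, x⟩)), φ y) ∈ F := by
  have hm' : (15 : ℤ) < #G.edgeFinset := by exact_mod_cast hm
  set h : Unit ⊕ ((Σ i : Fin k, Fin (len i - 1)) ⊕ (Fin p ⊕ Fin q)) := Sum.inl () with hh
  set a : Unit ⊕ ((Σ i : Fin k, Fin (len i - 1)) ⊕ (Fin p ⊕ Fin q)) :=
    Sum.inr (Sum.inl ⟨i, ⟨0, by omega⟩⟩) with ha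
  set b : Unit ⊕ ((Σ i : Fin k, Fin (len i - 1)) ⊕ (Fin p ⊕ Fin q)) :=
    Sum.inr (Sum.inl ⟨i, ⟨1, by omega⟩⟩) with hb
  set c : Unit ⊕ ((Σ i : Fin k, Fin (len i - 1)) ⊕ (Fin p ⊕ Fin q)) :=
    Sum.inr (Sum.inl ⟨i, ⟨2, by omega⟩⟩) with hc
  have Na : ∀ y, (bigG k len (Fin p) q).Adj a y → y = h ∨ y = b := by
    rintro (_ | ⟨j, a'⟩ | x' | b') hy <;> simp [bigG, ha, hb, hh] at hy ⊢
    rcases hy.2 with ⟨rfl, h1⟩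
    simp [Fin.ext_iff, ← h1]
  have Nb : ∀ y, (bigG k len (Fin p) q).Adj b y → y = a ∨ y = c := by
    rintro (_ | ⟨j, a'⟩ | x' | b') hy <;> simp [bigG, ha, hb, hc] at hy ⊢
    · omega
    rcases hy.2 with ⟨rfl, h1⟩ | ⟨rfl, h1⟩
    · simp [Fin.ext_iff, ← h1]
    · simp [Fin.ext_iff, h1]
  have Nc : ∀ y, (bigG k len (Fin p) q).Adj c y → y = b ∨ y = h := by
    rintro (_ | ⟨j, a'⟩ | x' | b') hy <;> simp [bigG, hc, hb, hh] at hy ⊢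
    rcases hy.2 with ⟨rfl, h1⟩ | ⟨rfl, h1⟩
    · have := a'.2
      omega
    · simp [Fin.ext_iff]; omega
  have pull : ∀ {x : Unit ⊕ ((Σ i : Fin k, Fin (len i - 1)) ⊕ (Fin p ⊕ Fin q))} {u v},
      (∀ y, (bigG k len (Fin p) q).Adj x y → y = u ∨ y = v) →
      ∀ y, G.Adj (φ x) y → y = φ u ∨ y = φ v := by
    intro x u v H y hy
    obtain ⟨z, rfl⟩ := φ.surjective y
    rw [φ.map_adj_iff] at hy
    rcases H z hy with rfl | rfl <;> simp
  have HQ : CQuad G (φ h) (φ a) (φ b) (φ c) := by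
    refine ⟨φ.map_adj_iff.2 ?_, φ.map_adj_iff.2 ?_, φ.map_adj_iff.2 ?_, φ.map_adj_iff.2 ?_,
      φ.injective.ne ?_, φ.injective.ne ?_, pull Na, pull Nb, pull Nc⟩
    · simp [bigG, ha, hh]
    · simp [bigG, ha, hb]
    · simp [bigG, hc, hb]
    · simp [bigG, hc, hh]; omega
    · simp [hh, hb]
    · simp [ha, hc]
  refine ⟨{s(φ h, φ a), s(φ a, φ b), s(φ h, φ c), s(φ c, φ b)}, ?_, ?_⟩
  · have := Finset.sum_le_card_nsmul {s(φ h, φ a), s(φ a, φ b), s(φ h, φ c), s(φ c, φ b)} (fe G)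
      (8 * (#G.edgeFinset : ℤ) - 16) ?_
    · refine this.trans ?_
      rw [nsmul_eq_mul]
      have h4 : (#({s(φ h, φ a), s(φ a, φ b), s(φ h, φ c), s(φ c, φ b)} : Finset (Sym2 V)) : ℤ) ≤ 4 := by
        exact_mod_cast Finset.card_le_four
      nlinarith
    · intro e he
      simp only [mem_insert, mem_singleton] at he
      rcases he with rfl | rfl | rfl | rfl
      · exact fe_le G _ _ (HQ.val1 hG hm) (by linarith)
      · exact fe_le G _ _ (HQ.val2 hG hm) (by linarith)
      · exact fe_le G _ _ (HQ.symm.val1 hG hm) (by linarith)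
      · exact fe_le G _ _ (HQ.symm.val2 hG hm) (by linarith)
  · intro x y hxy
    have hx : (⟨0, by omega⟩ : Fin (len i - 1)) = x ∨ (⟨1, by omega⟩ : Fin (len i - 1)) = x ∨
        (⟨2, by omega⟩ : Fin (len i - 1)) = x := by
      have := x.2
      simp only [Fin.ext_iff]
      omega
    simp only [mem_insert, mem_singleton]
    rcases hx with rfl | rfl | rfl
    · rcases Na y hxy with h' | h' <;> rw [h']
      exacts [Or.inl Sym2.eq_swap, Or.inr (Or.inl rfl)]
    · rcases Nb y hxy with h' | h' <;> rw [h']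
      exacts [Or.inr (Or.inl Sym2.eq_swap), Or.inr (Or.inr (Or.inr Sym2.eq_swap))]
    · rcases Nc y hxy with h' | h' <;> rw [h']
      exacts [Or.inr (Or.inr (Or.inr rfl)), Or.inr (Or.inr (Or.inl Sym2.eq_swap))]

lemma big_cyc3 (hG : G.Connected) (hm : 15 < #G.edgeFinset)
    (φ : bigG k len (Fin p) q ≃g G) (i : Fin k) (hi : len i = 3) :
    ∃ F : Finset (Sym2 V),
      ∑ e ∈ F, fe G e ≤ 2 * (6 * (#G.edgeFinset : ℤ) - 9) + (#G.edgeFinset : ℤ) ^ 2 ∧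
      ∀ x y, (bigG k len (Fin p) q).Adj (Sum.inr (Sum.inl ⟨i, x⟩)) y →
        s(φ (Sum.inr (Sum.inl ⟨i, x⟩)), φ y) ∈ F := by
  have hm' : (15 : ℤ) < #G.edgeFinset := by exact_mod_cast hm
  set h : Unit ⊕ ((Σ i : Fin k, Fin (len i - 1)) ⊕ (Fin p ⊕ Fin q)) := Sum.inl () with hh
  set a : Unit ⊕ ((Σ i : Fin k, Fin (len i - 1)) ⊕ (Fin p ⊕ Fin q)) :=
    Sum.inr (Sum.inl ⟨i, ⟨0, by omega⟩⟩) with ha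
  set c : Unit ⊕ ((Σ i : Fin k, Fin (len i - 1)) ⊕ (Fin p ⊕ Fin q)) :=
    Sum.inr (Sum.inl ⟨i, ⟨1, by omega⟩⟩) with hc
  have Na : ∀ y, (bigG k len (Fin p) q).Adj a y → y = h ∨ y = c := by
    rintro (_ | ⟨j, a'⟩ | x' | b') hy <;> simp [bigG, ha, hc, hh] at hy ⊢
    rcases hy.2 with ⟨rfl, h1⟩
    simp [Fin.ext_iff, ← h1]
  have Nc : ∀ y, (bigG k len (Fin p) q).Adj c y → y = a ∨ y = h := by
    rintro (_ | ⟨j, a'⟩ | x' | b') hy <;> simp [bigG, hc, ha, hh] at hy ⊢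
    rcases hy.2 with ⟨rfl, h1⟩ | ⟨rfl, h1⟩
    · have := a'.2
      omega
    · simp [Fin.ext_iff]; omega
  have pull : ∀ {x : Unit ⊕ ((Σ i : Fin k, Fin (len i - 1)) ⊕ (Fin p ⊕ Fin q))} {u v},
      (∀ y, (bigG k len (Fin p) q).Adj x y → y = u ∨ y = v) →
      ∀ y, G.Adj (φ x) y → y = φ u ∨ y = φ v := by
    intro x u v H y hy
    obtain ⟨z, rfl⟩ := φ.surjective y
    rw [φ.map_adj_iff] at hy
    rcases H z hy with rfl | rfl <;> simp
  have e1 : G.Adj (φ h) (φ a) := φ.map_adj_iff.2 (by simp [bigG, ha, hh])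
  have e2 : G.Adj (φ a) (φ c) := φ.map_adj_iff.2 (by simp [bigG, ha, hc])
  have e3 : G.Adj (φ c) (φ h) := φ.map_adj_iff.2 (by simp [bigG, hc, hh]; omega)
  refine ⟨{s(φ h, φ a), s(φ h, φ c), s(φ a, φ c)}, ?_, ?_⟩
  · refine (fe_insert G _ _).trans ?_
    have h1 := fe_insert G s(φ h, φ c) {s(φ a, φ c)}
    rw [sum_singleton] at h1
    have h2 := fe_le G _ _ (val_tri hG hm e1 e2 e3 (pull Na) (pull Nc)) (by linarith)
    have h3 := fe_le G _ _ (val_tri hG hm e3.symm e2.symm e1.symm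
      (fun y hy => (pull Nc y hy).symm) (fun y hy => (pull Na y hy).symm)) (by linarith)
    have h4 : fe G s(φ a, φ c) ≤ (#G.edgeFinset : ℤ) ^ 2 := by
      refine fe_le G _ _ ?_ (by positivity)
      unfold gg
      nlinarith [sq_nonneg (dd G (φ a) (φ c))]
    linarith
  · intro x y hxy
    have hx : (⟨0, by omega⟩ : Fin (len i - 1)) = x ∨ (⟨1, by omega⟩ : Fin (len i - 1)) = x := by
      have := x.2
      simp only [Fin.ext_iff]
      omega
    simp only [mem_insert, mem_singleton]
    rcases hx with rfl | rfl
    · rcases Na y hxy with h' | h' <;> rw [h']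
      exacts [Or.inl Sym2.eq_swap, Or.inr (Or.inr rfl)]
    · rcases Nc y hxy with h' | h' <;> rw [h']
      exacts [Or.inr (Or.inr Sym2.eq_swap), Or.inr (Or.inl Sym2.eq_swap)]

lemma big_pend (hG : G.Connected) (hm : 15 < #G.edgeFinset)
    (φ : bigG k len (Fin p) q ≃g G) (j : Fin p) :
    fe G s(φ (Sum.inl ()), φ (Sum.inr (Sum.inr (Sum.inl j)))) ≤ 2 * (#G.edgeFinset : ℤ) - 1 := by
  have hm' : (15 : ℤ) < #G.edgeFinset := by exact_mod_cast hm
  refine fe_le G _ _ (val_pend hG hm (φ.map_adj_iff.2 (by simp [bigG])) ?_) (by linarith)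
  intro y hy
  obtain ⟨z, rfl⟩ := φ.surjective y
  rw [φ.map_adj_iff] at hy
  rcases z with _ | ⟨j, a'⟩ | x' | b' <;> simp [bigG] at hy ⊢

lemma big_sum0 (hG : G.Connected) (hm : 15 < #G.edgeFinset)
    (φ : bigG k len (Fin p) 0 ≃g G) (B : Fin k → ℤ)
    (hB : ∀ i, ∃ F : Finset (Sym2 V), ∑ e ∈ F, fe G e ≤ B i ∧
      ∀ x y, (bigG k len (Fin p) 0).Adj (Sum.inr (Sum.inl ⟨i, x⟩)) y →
        s(φ (Sum.inr (Sum.inl ⟨i, x⟩)), φ y) ∈ F) :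
    ∑ e ∈ G.edgeFinset, ge G e ≤ ∑ i, B i + p * (2 * (#G.edgeFinset : ℤ) - 1) := by
  choose F hF1 hF2 using hB
  have := cover_sum G F (fun j => s(φ (Sum.inl ()), φ (Sum.inr (Sum.inr (Sum.inl j))))) ∅ ?_
    (∑ i, B i) 0 (Finset.sum_le_sum fun i _ => hF1 i) _ (big_pend hG hm φ) (by simp)
  · linarith
  · intro x y hxy
    obtain ⟨x, rfl⟩ := φ.surjective x
    obtain ⟨y, rfl⟩ := φ.surjective y
    rw [φ.map_adj_iff] at hxy
    rcases x with _ | ⟨i, a⟩ | x | b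
    · rcases y with _ | ⟨i', a'⟩ | x' | b'
      · exact absurd hxy (by simp)
      · left; exact ⟨i', by rw [Sym2.eq_swap]; exact hF2 _ _ _ hxy.symm⟩
      · right; left; exact ⟨x', rfl⟩
      · exact b'.elim0
    · left; exact ⟨i, hF2 _ _ _ hxy⟩
    · rcases y with _ | ⟨i', a'⟩ | x' | b'
      · right; left; exact ⟨x, Sym2.eq_swap⟩
      · simp [bigG] at hxy
      · simp [bigG] at hxy
      · exact b'.elim0
    · exact b.elim0

lemma big_sum2 (hG : G.Connected) (hm : 15 < #G.edgeFinset)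
    (φ : bigG k len (Fin p) 2 ≃g G) (B : Fin k → ℤ)
    (hB : ∀ i, ∃ F : Finset (Sym2 V), ∑ e ∈ F, fe G e ≤ B i ∧
      ∀ x y, (bigG k len (Fin p) 2).Adj (Sum.inr (Sum.inl ⟨i, x⟩)) y →
        s(φ (Sum.inr (Sum.inl ⟨i, x⟩)), φ y) ∈ F) :
    ∑ e ∈ G.edgeFinset, ge G e ≤ ∑ i, B i + p * (2 * (#G.edgeFinset : ℤ) - 1) +
      ((6 * (#G.edgeFinset : ℤ) - 9) + (2 * (#G.edgeFinset : ℤ) - 1)) := by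
  have hm' : (15 : ℤ) < #G.edgeFinset := by exact_mod_cast hm
  choose F hF1 hF2 using hB
  have a1 : G.Adj (φ (Sum.inl ())) (φ (Sum.inr (Sum.inr (Sum.inr 0)))) :=
    φ.map_adj_iff.2 (by simp [bigG])
  have a2 : G.Adj (φ (Sum.inr (Sum.inr (Sum.inr 0)))) (φ (Sum.inr (Sum.inr (Sum.inr 1)))) :=
    φ.map_adj_iff.2 (by simp [bigG])
  have N0 : ∀ y, G.Adj (φ (Sum.inr (Sum.inr (Sum.inr 0)))) y →
      y = φ (Sum.inl ()) ∨ y = φ (Sum.inr (Sum.inr (Sum.inr 1))) := by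
    intro y hy
    obtain ⟨z, rfl⟩ := φ.surjective y
    rw [φ.map_adj_iff] at hy
    rcases z with _ | ⟨j, a'⟩ | x' | b' <;> simp [bigG] at hy ⊢
    clear * - hy
    fin_cases b' <;> simp at hy ⊢
  have N1 : ∀ y, G.Adj (φ (Sum.inr (Sum.inr (Sum.inr 1)))) y →
      y = φ (Sum.inr (Sum.inr (Sum.inr 0))) := by
    intro y hy
    obtain ⟨z, rfl⟩ := φ.surjective y
    rw [φ.map_adj_iff] at hy
    rcases z with _ | ⟨j, a'⟩ | x' | b' <;> simp [bigG] at hy ⊢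
    clear * - hy
    fin_cases b' <;> simp at hy ⊢
  have v1 := fe_le G _ _ (val_path hG hm a1 a2 (φ.injective.ne (by simp)) N0 N1) (by linarith)
  have v2 := fe_le G _ _ (val_pend hG hm a2 N1) (by linarith)
  have hQ := fe_insert G s(φ (Sum.inl ()), φ (Sum.inr (Sum.inr (Sum.inr 0))))
    {s(φ (Sum.inr (Sum.inr (Sum.inr 0))), φ (Sum.inr (Sum.inr (Sum.inr 1))))}
  rw [sum_singleton] at hQ
  refine cover_sum G F (fun j => s(φ (Sum.inl ()), φ (Sum.inr (Sum.inr (Sum.inl j)))))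
    {s(φ (Sum.inl ()), φ (Sum.inr (Sum.inr (Sum.inr 0)))),
      s(φ (Sum.inr (Sum.inr (Sum.inr 0))), φ (Sum.inr (Sum.inr (Sum.inr 1))))} ?_
    (∑ i, B i) _ (Finset.sum_le_sum fun i _ => hF1 i) _ (big_pend hG hm φ) (by linarith)
  intro x y hxy
  by_cases h0 : x = φ (Sum.inr (Sum.inr (Sum.inr 0)))
  · subst h0
    rcases N0 y hxy with rfl | rfl <;> simp [Sym2.eq_swap]
  by_cases h0' : y = φ (Sum.inr (Sum.inr (Sum.inr 0)))
  · subst h0'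
    rcases N0 x hxy.symm with rfl | rfl <;> simp [Sym2.eq_swap]
  by_cases h1 : x = φ (Sum.inr (Sum.inr (Sum.inr 1)))
  · subst h1
    exact absurd (N1 y hxy) h0'
  by_cases h2 : y = φ (Sum.inr (Sum.inr (Sum.inr 1)))
  · subst h2
    rw [N1 x hxy.symm]
    simp [Sym2.eq_swap]
  obtain ⟨x, rfl⟩ := φ.surjective x
  obtain ⟨y, rfl⟩ := φ.surjective y
  rw [φ.map_adj_iff] at hxy
  rcases x with _ | ⟨i, a⟩ | x | b
  · rcases y with _ | ⟨i', a'⟩ | x' | b'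
    · exact absurd hxy (by simp)
    · left; exact ⟨i', by rw [Sym2.eq_swap]; exact hF2 _ _ _ hxy.symm⟩
    · right; left; exact ⟨x', rfl⟩
    · fin_cases b'
      exacts [absurd rfl h0', absurd rfl h2]
  · left; exact ⟨i, hF2 _ _ _ hxy⟩
  · rcases y with _ | ⟨i', a'⟩ | x' | b'
    · right; left; exact ⟨x, Sym2.eq_swap⟩
    · simp [bigG] at hxy
    · simp [bigG] at hxy
    · simp [bigG] at hxy
  · fin_cases b
    exacts [absurd rfl h0, absurd rfl h1]

end

/-! ### Part 10: conclusion -/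

lemma bundleLen {k : ℕ} {len len' : Fin k → ℕ} (h : len = len') (p : ℕ) :
    Nonempty (bundleGraph k len p ≃g bundleGraph k len' p) := by
  subst h
  exact ⟨SimpleGraph.Iso.refl⟩

lemma upper_A {V : Type*} [Fintype V] {G : SimpleGraph V} (hG : G.Connected)
    (hm : 15 < #G.edgeFinset) (n k : ℕ) (hn : Fintype.card V = n)
    (hk : #G.edgeFinset + 1 = n + k) (h : Nonempty (G ≃g GStar1 n k)) :
    ∑ e ∈ G.edgeFinset, ge G e ≤ (#G.edgeFinset : ℤ) * (2 * (#G.edgeFinset : ℤ) - 1) +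
      (k : ℤ) * (24 * (#G.edgeFinset : ℤ) - 60) + 4 * ((#G.edgeFinset : ℤ) - 2) := by
  obtain ⟨φ⟩ := h
  have φ' : bigG k (fun _ => 4) (Fin (n - 3 * k - 3)) 2 ≃g G := (bigStar n k).trans φ.symm
  have hc := Fintype.card_congr φ'.toEquiv
  simp at hc
  have := big_sum2 hG hm φ' (fun _ => 4 * (8 * (#G.edgeFinset : ℤ) - 16))
    (fun i => big_cyc4 hG hm φ' i rfl)
  clear φ' φ
  generalize n - 3 * k - 3 = p at *
  have hp : (#G.edgeFinset : ℤ) = 4 * k + p + 2 := by omega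
  simp only [sum_const, card_univ, Fintype.card_fin, nsmul_eq_mul] at this
  refine this.trans (le_of_eq ?_)
  have hp' : (p : ℤ) = #G.edgeFinset - 4 * k - 2 := by linarith
  rw [hp']
  ring

lemma upper_B {V : Type*} [Fintype V] {G : SimpleGraph V} (hG : G.Connected)
    (hm : 15 < #G.edgeFinset) (n k p : ℕ) (hn : Fintype.card V = n)
    (hk : #G.edgeFinset + 1 = n + (k + 1))
    (h : Nonempty (G ≃g bundleGraph (k + 1) (fun i => if (i : ℕ) = 0 then 3 else 4) p)) :
    ∑ e ∈ G.edgeFinset, ge G e ≤ (#G.edgeFinset : ℤ) * (2 * (#G.edgeFinset : ℤ) - 1) +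
      ((k + 1 : ℕ) : ℤ) * (24 * (#G.edgeFinset : ℤ) - 60) +
      ((#G.edgeFinset : ℤ) - 3) * ((#G.edgeFinset : ℤ) - 15) := by
  obtain ⟨φ⟩ := h
  have φ' : bigG (k + 1) (fun i => if (i : ℕ) = 0 then 3 else 4) (Fin p) 0 ≃g G :=
    (bigBundle (k + 1) _ p).trans φ.symm
  have hc := Fintype.card_congr φ'.toEquiv
  simp [Fin.sum_univ_succ] at hc
  have := big_sum0 hG hm φ' (fun i => if (i : ℕ) = 0 then
      2 * (6 * (#G.edgeFinset : ℤ) - 9) + (#G.edgeFinset : ℤ) ^ 2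
      else 4 * (8 * (#G.edgeFinset : ℤ) - 16)) ?_
  · have hp : (#G.edgeFinset : ℤ) = 4 * k + p + 3 := by omega
    rw [Fin.sum_univ_succ] at this
    simp at this
    refine this.trans (le_of_eq ?_)
    have hp' : (p : ℤ) = #G.edgeFinset - 4 * k - 3 := by linarith
    rw [hp']
    push_cast
    ring
  · intro i
    by_cases hi : (i : ℕ) = 0
    · simp only [hi, if_true]
      exact big_cyc3 hG hm φ' i (by simp [hi])
    · simp only [hi, if_false]
      exact big_cyc4 hG hm φ' i (by simp [hi])

/-- second-minimum edge revised Szeged index of cacti. For a cactus with `n`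
vertices, `k` cycles and `m` edges (`m > 15`, `m > 4k`) which is not the bundle `C₁(n,k)`
of `k` quadrangles: if `m ≥ 20` then `Sz*ₑ(G) ≥ (2m² + 3m + 4k(6m−15) − 8)/4` with
equality iff `G ≅ G*₁`; if `15 < m ≤ 19` then
`Sz*ₑ(G) ≥ (3m² − 19m + 4k(6m−15) + 45)/4` with equality iff `G` is the bundle of one
triangle and `k − 1` quadrangles. -/
theorem stmt19 {V : Type*} [Fintype V] (G : SimpleGraph V) (hG : IsCactus G)
    (n k m : ℕ) (hn : Fintype.card V = n) (hm : G.edgeFinset.card = m)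
    (hkm : m = n - 1 + k) (h15 : 15 < m) (h4k : 4 * k < m)
    (hnot : ¬ Nonempty (G ≃g bundleGraph k (fun _ => 4) (n - 3 * k - 1))) :
    (20 ≤ m →
      (2 * (m : ℚ) ^ 2 + 3 * m + 4 * k * (6 * (m : ℚ) - 15) - 8) / 4 ≤ szRevE G ∧
      (szRevE G = (2 * (m : ℚ) ^ 2 + 3 * m + 4 * k * (6 * (m : ℚ) - 15) - 8) / 4 ↔
        Nonempty (G ≃g GStar1 n k))) ∧
    (m ≤ 19 →
      (3 * (m : ℚ) ^ 2 - 19 * m + 4 * k * (6 * (m : ℚ) - 15) + 45) / 4 ≤ szRevE G ∧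
      (szRevE G = (3 * (m : ℚ) ^ 2 - 19 * m + 4 * k * (6 * (m : ℚ) - 15) + 45) / 4 ↔
        Nonempty (G ≃g bundleGraph k (fun i => if (i : ℕ) = 0 then 3 else 4)
          (n + k - 1 - (4 * k - 1))))) := by
  have hcon : G.Connected := hG.1
  have hQ : CycDisj G := cactus_disj hG
  have hcount := cycs_count _ G hcon hQ rfl
  have hne : Nonempty V := hcon.nonempty
  have hpos : 0 < Fintype.card V := Fintype.card_pos
  have hk : #(cycs G) = k := by omega
  have hk1 : #G.edgeFinset + 1 = n + k := by omega
  have hsum := cyc_sum hQ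
  rw [show (∑ e ∈ Brd G, bexc G e + ∑ C ∈ cycs G, cexc G C) = excS G from rfl, hk] at hsum
  have hsz := sz_edges G
  have h15' : 15 < #G.edgeFinset := by omega
  have h4k' : 4 * k < #G.edgeFinset := by omega
  have hmq : (#G.edgeFinset : ℤ) = (m : ℤ) := by rw [hm]
  constructor
  · intro h20
    have hval : (2 * (m : ℚ) ^ 2 + 3 * m + 4 * k * (6 * (m : ℚ) - 15) - 8) / 4 =
        (((m : ℤ) * (2 * (m : ℤ) - 1) + (k : ℤ) * (24 * (m : ℤ) - 60) + 4 * ((m : ℤ) - 2) : ℤ) : ℚ)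
          / 4 := by
      push_cast; ring
    rw [hval, hsz, hsum, hmq]
    rcases num_A hcon hQ (by omega) with ⟨hB, hC⟩ | ⟨hlow, heq⟩
    · exact absurd (struct_good hcon hQ n k hn hk h4k' hB hC) hnot
    rw [hmq] at hlow heq
    constructor
    · have : (m : ℤ) * (2 * (m : ℤ) - 1) + (k : ℤ) * (24 * (m : ℤ) - 60) + 4 * ((m : ℤ) - 2) ≤
        (m : ℤ) * (2 * (m : ℤ) - 1) + (k : ℤ) * (24 * (m : ℤ) - 60) + excS G := by linarith
      have := (Int.cast_le (R := ℚ)).2 this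
      linarith
    · constructor
      · intro h
        have h' := (div_left_inj' (by norm_num : (4 : ℚ) ≠ 0)).1 h
        have h'' := Int.cast_injective h'
        obtain ⟨e₀, he₀, hI, hB, hC⟩ := heq (by linarith)
        exact struct_A hcon hQ n k hn hk e₀ he₀ hI hB hC
      · intro h
        have hu := upper_A hcon h15' n k hn hk1 h
        rw [hsum, hmq] at hu
        have : excS G = 4 * ((m : ℤ) - 2) := by linarith
        rw [this]
  · intro h19
    have hval : (3 * (m : ℚ) ^ 2 - 19 * m + 4 * k * (6 * (m : ℚ) - 15) + 45) / 4 =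
        (((m : ℤ) * (2 * (m : ℤ) - 1) + (k : ℤ) * (24 * (m : ℤ) - 60) +
          ((m : ℤ) - 3) * ((m : ℤ) - 15) : ℤ) : ℚ) / 4 := by
      push_cast; ring
    rw [hval, hsz, hsum, hmq]
    rcases num_B hcon hQ (by omega) (by omega) with ⟨hB, hC⟩ | ⟨hlow, heq⟩
    · exact absurd (struct_good hcon hQ n k hn hk h4k' hB hC) hnot
    rw [hmq] at hlow heq
    constructor
    · have : (m : ℤ) * (2 * (m : ℤ) - 1) + (k : ℤ) * (24 * (m : ℤ) - 60) +
          ((m : ℤ) - 3) * ((m : ℤ) - 15) ≤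
        (m : ℤ) * (2 * (m : ℤ) - 1) + (k : ℤ) * (24 * (m : ℤ) - 60) + excS G := by linarith
      have := (Int.cast_le (R := ℚ)).2 this
      linarith
    · constructor
      · intro h
        have h' := (div_left_inj' (by norm_num : (4 : ℚ) ≠ 0)).1 h
        have h'' := Int.cast_injective h'
        obtain ⟨C₀, hC₀, h3, hB, hC⟩ := heq (by linarith)
        exact struct_B hcon hQ n k hn hk h4k' C₀ hC₀ h3 hB hC
      · intro h
        rcases k with _ | k
        · exfalso
          apply hnot
          have hl : (fun i : Fin 0 => if (i : ℕ) = 0 then 3 else 4) = fun _ => 4 :=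
            funext fun i => i.elim0
          obtain ⟨φ⟩ := h
          obtain ⟨ψ⟩ := bundleLen hl (n + 0 - 1 - (4 * 0 - 1))
          have hp : n + 0 - 1 - (4 * 0 - 1) = n - 3 * 0 - 1 := by omega
          rw [← hp]
          exact ⟨φ.trans ψ⟩
        · have hu := upper_B hcon h15' n k _ hn hk1 h
          rw [hsum, hmq] at hu
          have : excS G = ((m : ℤ) - 3) * ((m : ℤ) - 15) := by linarith
          rw [this]
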